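/- There is a universal constant C with the following property. Let n, s ≥ 1 and let Z be uniformly distributed on the unit sphere of ℂⁿ ⊗ ℂˢ ≅ ℂ^{ns}. Let B_1, …, B_d be traceless n×n complex Hermitian matrices with tr(B_j B_k) = δ_{jk}. For j = 1, …, d let X_j = ⟨(B_j ⊗ I_s) Z, Z⟩, where B_j ⊗ I_s denotes the Kronecker product of B_j with the s×s identity matrix; equivalently, X_j = tr(ρ B_j) where ρ = tr₂(ZZ*) is the partial trace of the rank-one projection ZZ* over the second factor ℂˢ. Let g be a standard Gaussian random vector in ℝ^d. Then W₁( √(n(ns+1)) · X , g ) ≤ (C/√s) · Σ_{j=1}^d ‖B_j‖₄², where ‖B‖₄ = (tr(B⁴))^{1/4}. -/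

import Mathlib

open MeasureTheory ProbabilityTheory Matrix
open scoped Matrix Kronecker

universe u


lemma gauss_ibp1 (h h' : ℝ → ℝ) (C C' : ℝ) (hd : ∀ x, HasDerivAt h (h' x) x)
    (hc : Continuous h') (hb : ∀ x, |h x| ≤ C) (hb' : ∀ x, |h' x| ≤ C') :
    ∫ x, x * h x ∂(gaussianReal 0 1) = ∫ x, h' x ∂(gaussianReal 0 1) := by
  have hcont : Continuous h := continuous_iff_continuousAt.2 fun x => (hd x).continuousAt
  rw [integral_gaussianReal_eq_integral_smul (by norm_num),
    integral_gaussianReal_eq_integral_smul (by norm_num)]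
  have hpd : ∀ x, HasDerivAt (gaussianPDFReal 0 1) (-x * gaussianPDFReal 0 1 x) x := by
    intro x
    unfold gaussianPDFReal
    have : HasDerivAt (fun x : ℝ => Real.exp (-(x - 0) ^ 2 / (2 * ((1 : NNReal) : ℝ))))
        (Real.exp (-(x - 0) ^ 2 / (2 * ((1 : NNReal) : ℝ))) * (-x)) x := by
      apply HasDerivAt.exp
      have := ((((hasDerivAt_id x).sub_const 0).pow 2).neg).div_const (2 * ((1 : NNReal) : ℝ))
      refine this.congr_deriv ?_
      simp
      ring
    refine (this.const_mul ((√(2 * Real.pi * ((1 : NNReal) : ℝ)))⁻¹)).congr_deriv ?_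
    ring
  have hpc : Continuous (gaussianPDFReal 0 1) :=
    continuous_iff_continuousAt.2 fun x => (hpd x).continuousAt
  have hpi : Integrable (gaussianPDFReal 0 1) := integrable_gaussianPDFReal 0 1
  have hxp : Integrable (fun x => x * gaussianPDFReal 0 1 x) := by
    have := (integrable_mul_exp_neg_mul_sq (b := 1/2) (by norm_num)).const_mul
      ((√(2 * Real.pi * ((1 : NNReal) : ℝ)))⁻¹)
    refine this.congr (Filter.Eventually.of_forall fun x => ?_)
    simp only [gaussianPDFReal]
    have : -(x - 0) ^ 2 / (2 * ((1 : NNReal) : ℝ)) = -(1/2) * x ^ 2 := by simp; ring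
    rw [this]; ring
  have i1 : Integrable (fun x => gaussianPDFReal 0 1 x • h' x) := by
    simp only [smul_eq_mul]
    refine (hpi.norm.mul_const C').mono' (hpc.mul hc).aestronglyMeasurable
      (Filter.Eventually.of_forall fun x => ?_)
    rw [norm_mul]
    exact mul_le_mul_of_nonneg_left (hb' x) (norm_nonneg _)
  have i2 : Integrable (fun x => gaussianPDFReal 0 1 x • (x * h x)) := by
    simp only [smul_eq_mul]
    refine (hxp.norm.mul_const C).mono' (hpc.mul (continuous_id.mul hcont)).aestronglyMeasurable
      (Filter.Eventually.of_forall fun x => ?_)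
    rw [show gaussianPDFReal 0 1 x * (x * h x) = (x * gaussianPDFReal 0 1 x) * h x by ring, norm_mul]
    exact mul_le_mul_of_nonneg_left (hb x) (norm_nonneg _)
  have i3 : Integrable (fun x => gaussianPDFReal 0 1 x * h x) := by
    refine (hpi.norm.mul_const C).mono' (hpc.mul hcont).aestronglyMeasurable
      (Filter.Eventually.of_forall fun x => ?_)
    rw [norm_mul]
    exact mul_le_mul_of_nonneg_left (hb x) (norm_nonneg _)
  have key := integral_eq_zero_of_hasDerivAt_of_integrable
    (f := fun x => gaussianPDFReal 0 1 x * h x)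
    (f' := fun x => gaussianPDFReal 0 1 x • h' x - gaussianPDFReal 0 1 x • (x * h x))
    (fun x => by
      refine ((hpd x).mul (hd x)).congr_deriv ?_
      simp only [smul_eq_mul]; ring) (i1.sub i2) i3
  rw [integral_sub i1 i2] at key
  linarith

lemma gauss_int_poly (d : ℕ) (k : Fin d) :
    Integrable (fun x : Fin d → ℝ => x k) (Measure.pi fun _ : Fin d => gaussianReal 0 1) := by
  have : Integrable (fun x : ℝ => x) (gaussianReal 0 1) :=
    memLp_one_iff_integrable.1 (memLp_id_gaussianReal 1)
  exact (measurePreserving_eval (fun _ : Fin d => gaussianReal 0 1) k).integrable_comp_of_integrable this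

lemma gauss_ibp (d : ℕ) (k : Fin d) (u : (Fin d → ℝ) → ℝ) (D : (Fin d → ℝ) → (Fin d → ℝ) →L[ℝ] ℝ)
    (C C' : ℝ) (hd : ∀ x, HasFDerivAt u (D x) x) (hc : Continuous D) (hb : ∀ x, |u x| ≤ C)
    (hb' : ∀ x, |D x (Pi.single k 1)| ≤ C') :
    ∫ x, x k * u x ∂(Measure.pi fun _ : Fin d => gaussianReal 0 1) =
      ∫ x, D x (Pi.single k 1) ∂(Measure.pi fun _ : Fin d => gaussianReal 0 1) := by
  obtain _ | m := d
  · exact k.elim0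
  have hcont : Continuous u := continuous_iff_continuousAt.2 fun x => (hd x).continuousAt
  have hmp := ((measurePreserving_piFinSuccAbove (fun _ : Fin (m+1) => gaussianReal 0 1) k).symm)
  rw [← hmp.integral_comp', ← hmp.integral_comp']
  have I1 : Integrable (fun x : Fin (m+1) → ℝ => x k * u x)
      (Measure.pi fun _ : Fin (m+1) => gaussianReal 0 1) := by
    refine ((gauss_int_poly _ k).norm.mul_const C).mono' (by fun_prop)
      (Filter.Eventually.of_forall fun x => ?_)
    rw [norm_mul]
    exact mul_le_mul_of_nonneg_left (hb x) (norm_nonneg _)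
  have I2 : Integrable (fun x : Fin (m+1) → ℝ => D x (Pi.single k 1))
      (Measure.pi fun _ : Fin (m+1) => gaussianReal 0 1) := by
    refine (integrable_const C').mono' (Continuous.aestronglyMeasurable (by fun_prop))
      (Filter.Eventually.of_forall fun x => hb' x)
  have J1 := hmp.integrable_comp_of_integrable I1
  have J2 := hmp.integrable_comp_of_integrable I2
  refine (integral_prod_symm _ J1).trans (Eq.trans ?_ (integral_prod_symm _ J2).symm)
  congr 1
  ext y
  have e : ∀ t : ℝ, (MeasurableEquiv.piFinSuccAbove (fun _ : Fin (m+1) => ℝ) k).symm (t, y)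
      = k.insertNth t y := fun t => rfl
  simp only [Function.comp_apply, e, Fin.insertNth_apply_same]
  have hder : ∀ t : ℝ, HasDerivAt (fun t : ℝ => (k.insertNth t y : Fin (m+1) → ℝ)) (Pi.single k 1) t := by
    intro t
    rw [hasDerivAt_pi]
    intro i
    refine Fin.succAboveCases k ?_ ?_ i
    · simpa using hasDerivAt_id' t
    · intro j
      simpa using hasDerivAt_const t (y j)
  have hic : Continuous (fun t : ℝ => (k.insertNth t y : Fin (m+1) → ℝ)) :=
    continuous_iff_continuousAt.2 fun x => (hder x).continuousAt
  refine gauss_ibp1 (fun t => u (k.insertNth t y)) (fun t => D (k.insertNth t y) (Pi.single k 1)) C C'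
    (fun t => ?_) ?_ (fun t => hb _) (fun t => hb' _)
  · exact (hd _).comp_hasDerivAt t (hder t)
  · exact (hc.comp hic).clm_apply continuous_const



noncomputable def qf {ι : Type*} [Fintype ι] (M : Matrix ι ι ℂ) (z : ι → ℂ) : ℂ :=
  star z ⬝ᵥ (M *ᵥ z)

structure SphInv {ι : Type*} [Fintype ι] [DecidableEq ι] (μ : Measure (ι → ℂ)) : Prop where
  prob : IsProbabilityMeasure μ
  sph : ∀ᵐ z ∂μ, ∑ j, Complex.normSq (z j) = 1
  inv : ∀ V ∈ Matrix.unitaryGroup ι ℂ, μ.map (fun z => V *ᵥ z) = μ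

section sphere
set_option linter.unusedSectionVars false
variable {ι : Type*} [Fintype ι] [DecidableEq ι]

lemma qf_cont (M : Matrix ι ι ℂ) : Continuous (qf M) := by
  unfold qf
  simp only [dotProduct, mulVec]
  fun_prop

lemma sph_compact : IsCompact {z : ι → ℂ | ∑ j, Complex.normSq (z j) = 1} := by
  apply Metric.isCompact_of_isClosed_isBounded
  · exact isClosed_eq (continuous_finsetSum _ fun j _ => Complex.continuous_normSq.comp (continuous_apply j))
      continuous_const
  · refine (Metric.isBounded_closedBall (x := (0 : ι → ℂ)) (r := 1)).subset ?_
    intro z hz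
    rw [mem_closedBall_zero_iff, pi_norm_le_iff_of_nonneg (by norm_num)]
    intro i
    have h1 : Complex.normSq (z i) ≤ 1 := by
      rw [← (show ∑ j, Complex.normSq (z j) = 1 from hz)]
      exact Finset.single_le_sum (f := fun j => Complex.normSq (z j))
        (fun j _ => Complex.normSq_nonneg _) (Finset.mem_univ i)
    rw [Complex.normSq_eq_norm_sq] at h1
    nlinarith [norm_nonneg (z i)]

lemma sph_bdd {E : Type*} [NormedAddCommGroup E] (Φ : (ι → ℂ) → E) (h : Continuous Φ) :
    ∃ C, ∀ z : ι → ℂ, ∑ j, Complex.normSq (z j) = 1 → ‖Φ z‖ ≤ C := by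
  obtain ⟨C, hC⟩ := (sph_compact (ι := ι)).exists_bound_of_continuousOn h.continuousOn
  exact ⟨C, fun z hz => hC z hz⟩

lemma sph_integrable {E : Type*} [NormedAddCommGroup E] [SecondCountableTopology E] 
    {μ : Measure (ι → ℂ)} (hμ : SphInv μ)
    (Φ : (ι → ℂ) → E) (h : Continuous Φ) : Integrable Φ μ := by
  have := hμ.prob
  obtain ⟨C, hC⟩ := sph_bdd Φ h
  refine (integrable_const C).mono' h.aestronglyMeasurable ?_
  filter_upwards [hμ.sph] with z hz using hC z hz

lemma path_unitary (L : Matrix ι ι ℂ) (hL : Lᴴ = -L) (t : ℝ) :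
    NormedSpace.exp (t • L) ∈ Matrix.unitaryGroup ι ℂ := by
  rw [Matrix.mem_unitaryGroup_iff, star_eq_conjTranspose, ← Matrix.exp_conjTranspose,
    conjTranspose_smul, hL, star_trivial, smul_neg, Matrix.exp_neg, Matrix.mul_nonsing_inv]
  exact (Matrix.isUnit_iff_isUnit_det _).1 (Matrix.isUnit_exp _)

lemma path_add (L : Matrix ι ι ℂ) (t h : ℝ) :
    NormedSpace.exp ((t + h) • L) = NormedSpace.exp (h • L) * NormedSpace.exp (t • L) := by
  rw [add_comm, add_smul, Matrix.exp_add_of_commute]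
  exact ((Commute.refl L).smul_left _).smul_right _

section pathnorm

attribute [local instance] Matrix.linftyOpNormedRing Matrix.linftyOpNormedAlgebra

lemma path_deriv (L : Matrix ι ι ℂ) (z : ι → ℂ) (i : ι) :
    HasDerivAt (fun t : ℝ => (NormedSpace.exp (t • L) *ᵥ z) i) ((L *ᵥ z) i) 0 := by
  have h := hasDerivAt_exp_smul_const (𝕂 := ℝ) L (0 : ℝ)
  simp only [zero_smul, NormedSpace.exp_zero, one_mul] at h
  let T : Matrix ι ι ℂ →ₗ[ℝ] ℂ :=
    { toFun := fun M => (M *ᵥ z) i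
      map_add' := fun A B => by simp [add_mulVec]
      map_smul' := fun c A => by simp [smul_mulVec] }
  exact (LinearMap.toContinuousLinearMap T).hasFDerivAt.comp_hasDerivAt (0:ℝ) h

end pathnorm

lemma sph_unitary (V : Matrix ι ι ℂ) (hV : V ∈ Matrix.unitaryGroup ι ℂ) (z : ι → ℂ) :
    ∑ j, Complex.normSq ((V *ᵥ z) j) = ∑ j, Complex.normSq (z j) := by
  have e : ∀ w : ι → ℂ, ((∑ j, Complex.normSq (w j) : ℝ) : ℂ) = star w ⬝ᵥ w := by
    intro w
    push_cast
    simp only [dotProduct, Pi.star_apply, Complex.normSq_eq_conj_mul_self, RCLike.star_def]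
  have : ((∑ j, Complex.normSq ((V *ᵥ z) j) : ℝ) : ℂ) = ((∑ j, Complex.normSq (z j) : ℝ) : ℂ) := by
    rw [e, e, star_mulVec, dotProduct_mulVec, vecMul_vecMul, ← star_eq_conjTranspose,
      (Matrix.mem_unitaryGroup_iff').1 hV, vecMul_one]
  exact_mod_cast this

lemma inv_ibp {μ : Measure (ι → ℂ)} (hμ : SphInv μ) (L : Matrix ι ι ℂ) (hL : Lᴴ = -L)
    (Φ Ψ : (ι → ℂ) → ℂ) (hΦ : Continuous Φ) (hΨ : Continuous Ψ)
    (hd : ∀ z, HasDerivAt (fun t : ℝ => Φ (NormedSpace.exp (t • L) *ᵥ z)) (Ψ z) 0) :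
    ∫ z, Ψ z ∂μ = 0 := by
  have := hμ.prob
  obtain ⟨C, hC⟩ := sph_bdd Ψ hΨ
  have hmv : ∀ V : Matrix ι ι ℂ, Continuous (fun z : ι → ℂ => V *ᵥ z) := fun V =>
    Continuous.matrix_mulVec continuous_const continuous_id
  have hd' : ∀ z (t : ℝ), HasDerivAt (fun t : ℝ => Φ (NormedSpace.exp (t • L) *ᵥ z))
      (Ψ (NormedSpace.exp (t • L) *ᵥ z)) t := by
    intro z t
    have h1 := hd (NormedSpace.exp (t • L) *ᵥ z)
    have h2 : HasDerivAt (fun r : ℝ => r - t) 1 t := (hasDerivAt_id' t).sub_const t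
    have h3 := h1.scomp_of_eq t h2 (sub_self t).symm
    rw [one_smul] at h3
    refine h3.congr_of_eventuallyEq (Filter.Eventually.of_forall fun r => ?_)
    simp only [Function.comp_apply, mulVec_mulVec]
    rw [← path_add]; simp
  have key := (hasDerivAt_integral_of_dominated_loc_of_deriv_le (μ := μ) (bound := fun _ => C)
    (F := fun (t : ℝ) z => Φ (NormedSpace.exp (t • L) *ᵥ z))
    (F' := fun (t : ℝ) z => Ψ (NormedSpace.exp (t • L) *ᵥ z)) (x₀ := 0) (s := Set.univ)
    Filter.univ_mem
    (Filter.Eventually.of_forall fun t => (hΦ.comp (hmv _)).aestronglyMeasurable)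
    (sph_integrable hμ _ (hΦ.comp (hmv _)))
    (hΨ.comp (hmv _)).aestronglyMeasurable
    (by
      filter_upwards [hμ.sph] with z hz t _
      exact hC _ (by rw [sph_unitary _ (path_unitary L hL t)]; exact hz))
    (integrable_const C)
    (Filter.Eventually.of_forall fun z t _ => hd' z t)).2
  have hconst : (fun t : ℝ => ∫ z, Φ (NormedSpace.exp (t • L) *ᵥ z) ∂μ) = fun _ => ∫ z, Φ z ∂μ := by
    ext t
    conv_rhs => rw [← hμ.inv _ (path_unitary L hL t)]
    rw [integral_map (hmv _).measurable.aemeasurable hΦ.aestronglyMeasurable]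
  rw [hconst] at key
  have := key.unique (hasDerivAt_const _ _)
  simpa using this

lemma qf_deriv (M L : Matrix ι ι ℂ) (hL : Lᴴ = -L) (z : ι → ℂ) :
    HasDerivAt (fun t : ℝ => qf M (NormedSpace.exp (t • L) *ᵥ z)) (qf (M * L - L * M) z) 0 := by
  have h := fun i => path_deriv L z i
  have h2 : HasDerivAt (fun t : ℝ => qf M (NormedSpace.exp (t • L) *ᵥ z))
      (star (L *ᵥ z) ⬝ᵥ (M *ᵥ z) + star z ⬝ᵥ (M *ᵥ (L *ᵥ z))) 0 := by
    unfold qf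
    simp only [dotProduct]
    rw [← Finset.sum_add_distrib]
    refine HasDerivAt.fun_sum fun i _ => ?_
    have h3 : HasDerivAt (fun t : ℝ => (M *ᵥ (NormedSpace.exp (t • L) *ᵥ z)) i)
        ((M *ᵥ (L *ᵥ z)) i) 0 := by
      simp only [mulVec, dotProduct] at h ⊢
      exact HasDerivAt.fun_sum fun j _ => (h j).const_mul (M i j)
    have h4 := (h i).star.mul h3
    refine h4.congr_deriv ?_
    simp
  refine h2.congr_deriv ?_
  rw [star_mulVec, hL, qf, sub_mulVec, dotProduct_sub, ← mulVec_mulVec, ← mulVec_mulVec,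
    vecMul_neg, neg_dotProduct, dotProduct_mulVec _ L]
  ring
end sphere


section sphere
variable {ι : Type*} [Fintype ι] [DecidableEq ι]
set_option linter.unusedSectionVars false

lemma qf_add (M N : Matrix ι ι ℂ) (z : ι → ℂ) : qf (M + N) z = qf M z + qf N z := by
  simp [qf, add_mulVec, dotProduct_add]
lemma qf_sub (M N : Matrix ι ι ℂ) (z : ι → ℂ) : qf (M - N) z = qf M z - qf N z := by
  simp [qf, sub_mulVec, dotProduct_sub]
lemma qf_smul (c : ℂ) (M : Matrix ι ι ℂ) (z : ι → ℂ) : qf (c • M) z = c * qf M z := by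
  simp [qf, smul_mulVec, dotProduct_smul]
lemma qf_sum {κ : Type*} (s : Finset κ) (M : κ → Matrix ι ι ℂ) (z : ι → ℂ) :
    qf (∑ k ∈ s, M k) z = ∑ k ∈ s, qf (M k) z := by
  classical
  induction s using Finset.induction_on with
  | empty => simp [qf]
  | insert a s ha ih => rw [Finset.sum_insert ha, Finset.sum_insert ha, qf_add, ih]
lemma qf_one (z : ι → ℂ) : qf 1 z = ((∑ j, Complex.normSq (z j) : ℝ) : ℂ) := by
  push_cast
  simp only [qf, one_mulVec, dotProduct, Pi.star_apply, Complex.normSq_eq_conj_mul_self, RCLike.star_def]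
lemma qf_star (M : Matrix ι ι ℂ) (z : ι → ℂ) : star (qf M z) = qf Mᴴ z := by
  rw [qf, qf, star_dotProduct, star_mulVec, dotProduct_mulVec, star_star]
lemma qf_herm (M : Matrix ι ι ℂ) (hM : Mᴴ = M) (z : ι → ℂ) : ((qf M z).re : ℂ) = qf M z := by
  have := qf_star M z
  rw [hM] at this
  exact Complex.conj_eq_iff_re.1 this

lemma clm_expand {d : ℕ} (D : (Fin d → ℝ) →L[ℝ] ℝ) (v : Fin d → ℝ) :
    D v = ∑ k, D (Pi.single k 1) * v k := by
  conv_lhs => rw [← Finset.univ_sum_single v]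
  rw [map_sum]
  refine Finset.sum_congr rfl fun k _ => ?_
  rw [show (Pi.single k (v k) : Fin d → ℝ) = v k • Pi.single k 1 by
    rw [← Pi.single_smul]; simp, map_smul, smul_eq_mul, mul_comm]

variable {d : ℕ}

/-- the quadratic statistics -/
noncomputable def Xq (A : Fin d → Matrix ι ι ℂ) (z : ι → ℂ) : Fin d → ℝ := fun k => (qf (A k) z).re

lemma Xq_cont (A : Fin d → Matrix ι ι ℂ) : Continuous (Xq A) :=
  continuous_pi fun k => Complex.continuous_re.comp (qf_cont _)

noncomputable def PsiL (A : Fin d → Matrix ι ι ℂ) (u : (Fin d → ℝ) → ℝ)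
    (D : (Fin d → ℝ) → (Fin d → ℝ) →L[ℝ] ℝ) (M L : Matrix ι ι ℂ) (z : ι → ℂ) : ℂ :=
  (∑ k, (D (Xq A z) (Pi.single k 1) : ℂ) * qf (A k * L - L * A k) z) * qf M z
    + (u (Xq A z) : ℂ) * qf (M * L - L * M) z

lemma PsiL_cont (A : Fin d → Matrix ι ι ℂ) (u : (Fin d → ℝ) → ℝ)
    (D : (Fin d → ℝ) → (Fin d → ℝ) →L[ℝ] ℝ) (hc : Continuous D) (hu : Continuous u)
    (M L : Matrix ι ι ℂ) : Continuous (PsiL A u D M L) := by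
  unfold PsiL
  have h1 := Xq_cont A
  have h2 := fun M : Matrix ι ι ℂ => qf_cont M
  have h3 : ∀ k, Continuous fun z => D (Xq A z) (Pi.single k 1) := fun k => by fun_prop
  fun_prop

lemma stein_skew {μ : Measure (ι → ℂ)} (hμ : SphInv μ) (A : Fin d → Matrix ι ι ℂ)
    (hA : ∀ k, (A k)ᴴ = A k) (u : (Fin d → ℝ) → ℝ)
    (D : (Fin d → ℝ) → (Fin d → ℝ) →L[ℝ] ℝ) (hd : ∀ x, HasFDerivAt u (D x) x) (hc : Continuous D)
    (M L : Matrix ι ι ℂ) (hL : Lᴴ = -L) : ∫ z, PsiL A u D M L z ∂μ = 0 := by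
  have hu : Continuous u := continuous_iff_continuousAt.2 fun x => (hd x).continuousAt
  refine inv_ibp hμ L hL (fun z => (u (Xq A z) : ℂ) * qf M z) _ ?_ (PsiL_cont A u D hc hu M L) ?_
  · have h1 := Xq_cont A
    have h2 := fun M : Matrix ι ι ℂ => qf_cont M
    fun_prop
  · intro z
    have h1 : HasDerivAt (fun t : ℝ => Xq A (NormedSpace.exp (t • L) *ᵥ z))
        (fun k => (qf (A k * L - L * A k) z).re) 0 := by
      rw [hasDerivAt_pi]
      intro k
      exact Complex.reCLM.hasFDerivAt.comp_hasDerivAt (0:ℝ) (qf_deriv (A k) L hL z)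
    have h2 := (hd _).comp_hasDerivAt (0:ℝ) h1
    have h3 := (Complex.ofRealCLM.hasFDerivAt.comp_hasDerivAt (0:ℝ) h2).mul (qf_deriv M L hL z)
    refine h3.congr_deriv ?_
    simp only [Function.comp_apply, zero_smul, NormedSpace.exp_zero, one_mulVec, Complex.ofRealCLM_apply, PsiL]
    rw [clm_expand]
    push_cast
    congr 2
    refine Finset.sum_congr rfl fun k _ => ?_
    rw [qf_herm]
    rw [conjTranspose_sub, conjTranspose_mul, conjTranspose_mul, hA, hL]
    simp [sub_eq_add_neg, add_comm]

lemma PsiL_lin (A : Fin d → Matrix ι ι ℂ) (u : (Fin d → ℝ) → ℝ)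
    (D : (Fin d → ℝ) → (Fin d → ℝ) →L[ℝ] ℝ) (M S T : Matrix ι ι ℂ) (c : ℂ) (z : ι → ℂ) :
    PsiL A u D M (S + c • T) z = PsiL A u D M S z + c * PsiL A u D M T z := by
  have h : ∀ N : Matrix ι ι ℂ, qf (N * (S + c • T) - (S + c • T) * N) z =
      qf (N * S - S * N) z + c * qf (N * T - T * N) z := by
    intro N
    rw [← qf_smul, ← qf_add]
    congr 1
    rw [mul_add, add_mul, mul_smul_comm, smul_mul_assoc, smul_sub]; abel
  simp only [PsiL, h]
  simp only [mul_add, Finset.sum_add_distrib, add_mul]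
  rw [show ∑ k, (D (Xq A z) (Pi.single k 1) : ℂ) * (c * qf (A k * T - T * A k) z)
    = c * ∑ k, (D (Xq A z) (Pi.single k 1) : ℂ) * qf (A k * T - T * A k) z by
    rw [Finset.mul_sum]; exact Finset.sum_congr rfl fun k _ => by ring]
  ring

lemma stein_all {μ : Measure (ι → ℂ)} (hμ : SphInv μ) (A : Fin d → Matrix ι ι ℂ)
    (hA : ∀ k, (A k)ᴴ = A k) (u : (Fin d → ℝ) → ℝ)
    (D : (Fin d → ℝ) → (Fin d → ℝ) →L[ℝ] ℝ) (hd : ∀ x, HasFDerivAt u (D x) x) (hc : Continuous D)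
    (M L : Matrix ι ι ℂ) : ∫ z, PsiL A u D M L z ∂μ = 0 := by
  have hu : Continuous u := continuous_iff_continuousAt.2 fun x => (hd x).continuousAt
  have e : L = (1/2 : ℂ) • (L - Lᴴ) + Complex.I • ((-Complex.I / 2) • (L + Lᴴ)) := by
    rw [smul_smul, show Complex.I * (-Complex.I / 2) = (1/2 : ℂ) by
      rw [mul_div_assoc', mul_neg, Complex.I_mul_I]; norm_num]
    rw [← smul_add, sub_add_add_cancel, ← two_smul ℂ L, smul_smul]; norm_num
  rw [e]
  simp only [PsiL_lin]
  rw [integral_add (sph_integrable hμ _ (PsiL_cont A u D hc hu _ _))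
    ((sph_integrable hμ _ (PsiL_cont A u D hc hu _ _)).const_mul _), integral_const_mul,
    stein_skew hμ A hA u D hd hc, stein_skew hμ A hA u D hd hc]
  · simp
  · rw [conjTranspose_smul, conjTranspose_add, conjTranspose_conjTranspose, ← neg_smul, add_comm]
    congr 1
    simp
    ring
  · rw [conjTranspose_smul, conjTranspose_sub, conjTranspose_conjTranspose, ← smul_neg, neg_sub]
    congr 1
    simp

lemma sum_casimir (A : Matrix ι ι ℂ) :
    ∑ a, ∑ b, ((A * single b a 1 - single b a 1 * A) * single a b 1
      - single a b 1 * (A * single b a 1 - single b a 1 * A)) =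
    (2 * Fintype.card ι : ℂ) • A - (2 * A.trace) • (1 : Matrix ι ι ℂ) := by
  have h1 : ∀ a b, (A * single b a 1 - single b a 1 * A) * single a b (1:ℂ)
      - single a b 1 * (A * single b a 1 - single b a 1 * A)
      = A * single b b 1 - A a a • single b b 1 - (A b b • single a a 1) + single a a 1 * A := by
    intro a b
    rw [sub_mul, mul_sub, mul_assoc, single_mul_single_same, ← mul_assoc (single a b (1:ℂ)),
      ← mul_assoc (single a b (1:ℂ)), single_mul_single_same]
    simp [single_mul_mul_single]
    abel
  have h2 : ∑ a, single a a (1:ℂ) = (1 : Matrix ι ι ℂ) := by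
    ext i j
    simp only [Matrix.sum_apply, single_apply, one_apply]
    by_cases h : i = j
    · subst h; simp
    · rw [if_neg h]
      exact Finset.sum_eq_zero fun a _ => if_neg fun hh => h (hh.1.symm.trans hh.2)
  simp only [h1, Finset.sum_add_distrib, Finset.sum_sub_distrib, ← Finset.mul_sum, ← Finset.sum_mul,
    ← Finset.smul_sum, ← Finset.sum_smul, h2]
  simp only [trace, diag_apply, mul_smul_comm, mul_one, one_mul, Finset.sum_const, Finset.card_univ, two_mul, add_smul,
    Nat.cast_smul_eq_nsmul]
  abel

lemma qf_mul_single (A : Matrix ι ι ℂ) (a b : ι) (z : ι → ℂ) :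
    qf (A * single a b 1) z = (star z ᵥ* A) a * z b := by
  rw [qf, ← mulVec_mulVec, dotProduct_mulVec]
  simp [single_mulVec, dotProduct, Function.update_apply]

lemma qf_single_mul (A : Matrix ι ι ℂ) (a b : ι) (z : ι → ℂ) :
    qf (single a b 1 * A) z = star (z a) * (A *ᵥ z) b := by
  rw [qf, ← mulVec_mulVec, single_mulVec]
  simp [dotProduct, Function.update_apply]

lemma sum_gamma (A B : Matrix ι ι ℂ) (z : ι → ℂ) :
    ∑ a, ∑ b, qf (A * single a b 1 - single a b 1 * A) z * qf (B * single b a 1 - single b a 1 * B) z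
    = 2 * (qf A z * qf B z) - qf 1 z * (qf (A * B) z + qf (B * A) z) := by
  have e1 : qf A z = ∑ a, (star z ᵥ* A) a * z a := by rw [qf, dotProduct_mulVec]; rfl
  have e1' : qf A z = ∑ a, star (z a) * (A *ᵥ z) a := by rw [qf]; rfl
  have e2 : qf B z = ∑ a, (star z ᵥ* B) a * z a := by rw [qf, dotProduct_mulVec]; rfl
  have e2' : qf B z = ∑ a, star (z a) * (B *ᵥ z) a := by rw [qf]; rfl
  have e3 : qf (A * B) z = ∑ a, (star z ᵥ* A) a * (B *ᵥ z) a := by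
    rw [qf, ← mulVec_mulVec, dotProduct_mulVec]; rfl
  have e4 : qf (B * A) z = ∑ a, (star z ᵥ* B) a * (A *ᵥ z) a := by
    rw [qf, ← mulVec_mulVec, dotProduct_mulVec]; rfl
  have e5 : qf 1 z = ∑ a, star (z a) * z a := by rw [qf, one_mulVec]; rfl
  rw [two_mul]
  nth_rw 1 [e1, e2]
  rw [mul_comm (qf A z) (qf B z), e1', e2', e3, e4, e5, mul_add]
  simp only [Finset.sum_mul_sum, qf_sub, qf_mul_single, qf_single_mul]
  rw [Finset.sum_comm (f := fun i j => star (z i) * z i * ((star z ᵥ* A) j * (B *ᵥ z) j))]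
  rw [← Finset.sum_add_distrib, ← Finset.sum_add_distrib, ← Finset.sum_sub_distrib]
  refine Finset.sum_congr rfl fun a _ => ?_
  rw [← Finset.sum_add_distrib, ← Finset.sum_add_distrib, ← Finset.sum_sub_distrib]
  refine Finset.sum_congr rfl fun b _ => ?_
  ring

lemma stein {μ : Measure (ι → ℂ)} (hμ : SphInv μ) (A : Fin d → Matrix ι ι ℂ)
    (hA : ∀ k, (A k)ᴴ = A k) (u : (Fin d → ℝ) → ℝ)
    (D : (Fin d → ℝ) → (Fin d → ℝ) →L[ℝ] ℝ) (hd : ∀ x, HasFDerivAt u (D x) x) (hc : Continuous D)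
    (M : Matrix ι ι ℂ) (hM : Mᴴ = M) :
    ∫ z, (u (Xq A z) * (Fintype.card ι * (qf M z).re - M.trace.re)) ∂μ =
    ∫ z, ∑ k, D (Xq A z) (Pi.single k 1) *
      ((qf ((1/2 : ℂ) • (A k * M + M * A k)) z).re - (qf (A k) z).re * (qf M z).re) ∂μ := by
  have hu : Continuous u := continuous_iff_continuousAt.2 fun x => (hd x).continuousAt
  have h0 : ∫ z, ∑ a, ∑ b, PsiL A u D (M * single b a 1 - single b a 1 * M) (single a b 1) z ∂μ = 0 := by
    rw [integral_finsetSum _ fun a _ => integrable_finsetSum _ fun b _ =>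
      sph_integrable hμ _ (PsiL_cont A u D hc hu _ _)]
    refine Finset.sum_eq_zero fun a _ => ?_
    rw [integral_finsetSum _ fun b _ => sph_integrable hμ _ (PsiL_cont A u D hc hu _ _)]
    exact Finset.sum_eq_zero fun b _ => stein_all hμ A hA u D hd hc _ _
  have h1 : ∫ z, ((u (Xq A z) * (Fintype.card ι * (qf M z).re - M.trace.re) -
      ∑ k, D (Xq A z) (Pi.single k 1) *
      ((qf ((1/2 : ℂ) • (A k * M + M * A k)) z).re - (qf (A k) z).re * (qf M z).re) : ℝ) : ℂ) ∂μ = 0 := by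
    rw [← mul_zero (1/2 : ℂ), ← h0, ← integral_const_mul]
    refine integral_congr_ae ?_
    filter_upwards [hμ.sph] with z hz
    have htr : (M.trace.re : ℂ) = M.trace := by
      apply Complex.conj_eq_iff_re.1
      have := trace_conjTranspose M
      rw [hM] at this
      exact this.symm
    have hh : ∀ k, ((1/2 : ℂ) • (A k * M + M * A k))ᴴ = (1/2 : ℂ) • (A k * M + M * A k) := by
      intro k
      rw [conjTranspose_smul, conjTranspose_add, conjTranspose_mul, conjTranspose_mul, hA, hM, add_comm]
      simp
    push_cast
    simp only [htr, qf_herm _ hM, qf_herm _ (hA _), qf_herm _ (hh _)]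
    unfold PsiL
    simp only [Finset.sum_add_distrib, ← Finset.mul_sum, ← qf_sum, sum_casimir]
    have e : ∑ a, ∑ b, (∑ k, (D (Xq A z) (Pi.single k 1) : ℂ) * qf (A k * single a b 1 - single a b 1 * A k) z) *
        qf (M * single b a 1 - single b a 1 * M) z = ∑ k, (D (Xq A z) (Pi.single k 1) : ℂ) *
        ∑ a, ∑ b, qf (A k * single a b 1 - single a b 1 * A k) z * qf (M * single b a 1 - single b a 1 * M) z := by
      simp only [Finset.sum_mul, Finset.mul_sum]
      rw [Finset.sum_comm (s := (Finset.univ : Finset (Fin d)))]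
      refine Finset.sum_congr rfl fun a _ => ?_
      rw [Finset.sum_comm (s := (Finset.univ : Finset (Fin d)))]
      exact Finset.sum_congr rfl fun b _ => Finset.sum_congr rfl fun k _ => by ring
    rw [e]
    simp only [sum_gamma]
    simp only [qf_sub, qf_smul, qf_add, qf_one, hz]
    rw [mul_add, Finset.mul_sum, sub_eq_neg_add, ← Finset.sum_neg_distrib]
    congr 1
    · refine Finset.sum_congr rfl fun k _ => ?_
      push_cast; ring
    · push_cast; ring
  rw [integral_complex_ofReal] at h1
  have h2 : (∫ z, (u (Xq A z) * (Fintype.card ι * (qf M z).re - M.trace.re) -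
      ∑ k, D (Xq A z) (Pi.single k 1) *
      ((qf ((1/2 : ℂ) • (A k * M + M * A k)) z).re - (qf (A k) z).re * (qf M z).re)) ∂μ) = 0 := by
    exact_mod_cast h1
  have c1 := Xq_cont A
  have c2 := fun M : Matrix ι ι ℂ => qf_cont M
  have c3 : ∀ k, Continuous fun z => D (Xq A z) (Pi.single k 1) := fun k => by fun_prop
  rw [integral_sub (sph_integrable hμ _ (by fun_prop)) (sph_integrable hμ _ (by fun_prop))] at h2
  linarith
end sphere


section sphere
variable {ι : Type*} [Fintype ι] [DecidableEq ι]

lemma sph_mean {μ : Measure (ι → ℂ)} (hμ : SphInv μ) (M : Matrix ι ι ℂ) (hM : Mᴴ = M) :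
    (Fintype.card ι : ℝ) * ∫ z, (qf M z).re ∂μ = M.trace.re := by
  have := hμ.prob
  have h := stein hμ (d := 0) (fun _ => 0) (fun k => k.elim0) (fun _ => 1) (fun _ => 0)
    (fun x => hasFDerivAt_const _ _) continuous_const M hM
  simp only [one_mul, Finset.univ_eq_empty, Finset.sum_empty, integral_zero] at h
  have c2 := fun M : Matrix ι ι ℂ => qf_cont M
  rw [integral_sub (sph_integrable hμ _ (by fun_prop)) (integrable_const _), integral_const_mul] at h
  simp at h
  linarith

lemma sph_second {μ : Measure (ι → ℂ)} (hμ : SphInv μ) (M : Matrix ι ι ℂ) (hM : Mᴴ = M) :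
    (Fintype.card ι + 1 : ℝ) * ∫ z, (qf M z).re ^ 2 ∂μ =
      M.trace.re * ∫ z, (qf M z).re ∂μ + ∫ z, (qf (M * M) z).re ∂μ := by
  have := hμ.prob
  have h := stein hμ (d := 1) (fun _ => M) (fun k => hM) (fun x => x 0)
    (fun _ => ContinuousLinearMap.proj 0)
    (fun x => (ContinuousLinearMap.proj (R := ℝ) (φ := fun _ : Fin 1 => ℝ) 0).hasFDerivAt) continuous_const M hM
  have c2 := fun M : Matrix ι ι ℂ => qf_cont M
  simp only [Xq, mul_sub, Finset.univ_unique, Fin.default_eq_zero, Finset.sum_singleton, Fin.isValue,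
    ContinuousLinearMap.proj_apply, Pi.single_eq_same, one_mul] at h
  rw [integral_sub (sph_integrable hμ _ (by fun_prop)) (sph_integrable hμ _ (by fun_prop)),
    integral_sub (sph_integrable hμ _ (by fun_prop)) (sph_integrable hμ _ (by fun_prop)),
    integral_mul_const] at h
  have e : (1/2 : ℂ) • (M * M + M * M) = M * M := by
    rw [← two_smul ℂ, smul_smul]; norm_num
  rw [e] at h
  have e1 : ∀ z, (qf M z).re * (Fintype.card ι * (qf M z).re) = (Fintype.card ι : ℝ) * (qf M z).re ^ 2 :=
    fun z => by ring
  simp only [e1, ← pow_two, integral_const_mul] at h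
  rw [pow_two M] at h
  linarith

lemma sph_var {μ : Measure (ι → ℂ)} (hμ : SphInv μ) (hN : 0 < Fintype.card ι)
    (M : Matrix ι ι ℂ) (hM : Mᴴ = M) :
    ∫ z, ((qf M z).re - M.trace.re / Fintype.card ι) ^ 2 ∂μ ≤
      (M * M).trace.re / (Fintype.card ι * (Fintype.card ι + 1)) := by
  have := hμ.prob
  have h1 := sph_mean hμ M hM
  have h2 := sph_second hμ M hM
  have h3 := sph_mean hμ (M * M) (by rw [conjTranspose_mul, hM])
  have c2 := fun M : Matrix ι ι ℂ => qf_cont M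
  have hN' : (0:ℝ) < Fintype.card ι := by exact_mod_cast hN
  set N : ℝ := (Fintype.card ι : ℝ)
  set t := M.trace.re
  have e : ∀ z, ((qf M z).re - t / N) ^ 2 = (qf M z).re ^ 2 - (2 * t / N) * (qf M z).re + (t / N)^2 :=
    fun z => by ring
  simp only [e]
  rw [integral_add (sph_integrable hμ _ (by fun_prop)) (integrable_const _),
    integral_sub (sph_integrable hμ _ (by fun_prop)) (sph_integrable hμ _ (by fun_prop)),
    integral_const_mul]
  simp only [integral_const, probReal_univ, one_smul]
  have e1 : ∫ z, (qf M z).re ∂μ = t / N := by rw [eq_div_iff hN'.ne']; linarith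
  have e3 : ∫ z, (qf (M * M) z).re ∂μ = (M * M).trace.re / N := by rw [eq_div_iff hN'.ne']; linarith
  rw [e1, e3] at h2
  have e2 : ∫ z, (qf M z).re ^ 2 ∂μ = (t * (t / N) + (M * M).trace.re / N) / (N + 1) := by
    rw [eq_div_iff (by positivity)]; linarith
  rw [e1, e2]
  have : (t * (t / N) + (M * M).trace.re / N) / (N + 1) - 2 * t / N * (t / N) + (t / N) ^ 2
      = (M * M).trace.re / (N * (N + 1)) - t ^ 2 / (N ^ 2 * (N + 1)) := by
    field_simp; ring
  rw [this]
  have : 0 ≤ t ^ 2 / (N ^ 2 * (N + 1)) := by positivity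
  linarith

open scoped ComplexOrder in
lemma tr_sq_nonneg (H : Matrix ι ι ℂ) (hH : Hᴴ = H) : 0 ≤ (H * H).trace.re := by
  have := (Matrix.posSemidef_conjTranspose_mul_self H).trace_nonneg
  rw [hH] at this
  exact (Complex.le_def.1 this).1

lemma tr_cs (P Q : Matrix ι ι ℂ) (hP : Pᴴ = P) (hQ : Qᴴ = Q) :
    ((P * Q).trace.re) ^ 2 ≤ (P * P).trace.re * (Q * Q).trace.re := by
  have h : ∀ t : ℝ, 0 ≤ (Q * Q).trace.re * (t * t) + (2 * (P * Q).trace.re) * t + (P * P).trace.re := by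
    intro t
    have h1 := tr_sq_nonneg (P + (t : ℂ) • Q) (by
      rw [conjTranspose_add, conjTranspose_smul, hP, hQ]; simp)
    have e : ((P + (t : ℂ) • Q) * (P + (t : ℂ) • Q)).trace =
        (t * t : ℝ) * (Q * Q).trace + (2 * t : ℝ) * (P * Q).trace + (P * P).trace := by
      simp only [mul_add, add_mul, trace_add, smul_mul_assoc, mul_smul_comm, trace_smul, smul_eq_mul,
        trace_mul_comm Q P]
      push_cast; ring
    rw [e, Complex.add_re, Complex.add_re, Complex.re_ofReal_mul, Complex.re_ofReal_mul] at h1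
    linarith
  have := discrim_le_zero h
  unfold discrim at this
  nlinarith

lemma tr_four (B C : Matrix ι ι ℂ) (hB : Bᴴ = B) (hC : Cᴴ = C) :
    (((1/2 : ℂ) • (B * C + C * B)) * ((1/2 : ℂ) • (B * C + C * B))).trace.re ≤
      √((B * B * B * B).trace.re) * √((C * C * C * C).trace.re) := by
  have h1 := tr_sq_nonneg (Complex.I • (B * C - C * B)) (by
    rw [conjTranspose_smul, conjTranspose_sub, conjTranspose_mul, conjTranspose_mul, hB, hC]
    rw [show star Complex.I = -Complex.I by simp, neg_smul, ← smul_neg, neg_sub])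
  have t1 : (B * C * (C * B)).trace = (B * B * (C * C)).trace := by
    rw [← mul_assoc, trace_mul_comm]; simp only [mul_assoc]
  have t2 : (C * B * (B * C)).trace = (B * B * (C * C)).trace := by
    rw [mul_assoc, trace_mul_comm]; simp only [mul_assoc]
  have t3 : (C * B * (C * B)).trace = (B * C * (B * C)).trace := by
    rw [mul_assoc, trace_mul_comm]; simp only [mul_assoc]
  have e1 : ((Complex.I • (B * C - C * B)) * (Complex.I • (B * C - C * B))).trace =
      ((2:ℝ):ℂ) * (B * B * (C * C)).trace - ((2:ℝ):ℂ) * (B * C * (B * C)).trace := by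
    simp only [smul_mul_assoc, mul_smul_comm, smul_smul, Complex.I_mul_I, trace_smul, mul_sub, sub_mul,
      trace_sub, t1, t2, t3, smul_eq_mul]
    push_cast; ring_nf; rw [Complex.I_sq]; ring
  have e2 : (((1/2 : ℂ) • (B * C + C * B)) * ((1/2 : ℂ) • (B * C + C * B))).trace =
      ((1/2:ℝ):ℂ) * (B * B * (C * C)).trace + ((1/2:ℝ):ℂ) * (B * C * (B * C)).trace := by
    simp only [smul_mul_assoc, mul_smul_comm, smul_smul, trace_smul, mul_add, add_mul,
      trace_add, t1, t2, t3, smul_eq_mul]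
    push_cast; ring
  rw [e1, Complex.sub_re, Complex.re_ofReal_mul, Complex.re_ofReal_mul] at h1
  rw [e2, Complex.add_re, Complex.re_ofReal_mul, Complex.re_ofReal_mul]
  have h2 := tr_cs (B * B) (C * C) (by rw [conjTranspose_mul, hB]) (by rw [conjTranspose_mul, hC])
  rw [show B * B * (B * B) = B * B * B * B by simp only [mul_assoc],
    show C * C * (C * C) = C * C * C * C by simp only [mul_assoc]] at h2
  have hb : 0 ≤ (B * B * B * B).trace.re := by
    have := tr_sq_nonneg (B * B) (by rw [conjTranspose_mul, hB])
    rwa [show B * B * (B * B) = B * B * B * B by simp only [mul_assoc]] at this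
  have h3 : (B * B * (C * C)).trace.re ≤ √((B * B * B * B).trace.re) * √((C * C * C * C).trace.re) := by
    rw [← Real.sqrt_mul hb]
    exact Real.le_sqrt_of_sq_le h2
  linarith

lemma tr_lower (B : Matrix ι ι ℂ) (hB : Bᴴ = B) (h1 : (B * B).trace.re = 1) :
    1 ≤ √(Fintype.card ι : ℝ) * √((B * B * B * B).trace.re) := by
  have h2 := tr_cs (B * B) 1 (by rw [conjTranspose_mul, hB]) conjTranspose_one
  rw [mul_one, h1, mul_one, trace_one] at h2
  rw [show B * B * (B * B) = B * B * B * B by simp only [mul_assoc]] at h2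
  rw [← Real.sqrt_mul (by positivity)]
  apply Real.le_sqrt_of_sq_le
  simp at h2
  linarith

end sphere



noncomputable abbrev gam (d : ℕ) : Measure (Fin d → ℝ) := Measure.pi fun _ : Fin d => gaussianReal 0 1

lemma gauss_sq_integrable (d : ℕ) (k : Fin d) : Integrable (fun x : Fin d → ℝ => x k ^ 2) (gam d) := by
  have : Integrable (fun x : ℝ => x ^ 2) (gaussianReal 0 1) :=
    (memLp_id_gaussianReal 2).integrable_sq
  exact (measurePreserving_eval (fun _ : Fin d => gaussianReal 0 1) k).integrable_comp_of_integrable this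

lemma gauss_mul_integrable (d : ℕ) (j k : Fin d) :
    Integrable (fun x : Fin d → ℝ => x j * x k) (gam d) := by
  refine ((gauss_sq_integrable d j).add (gauss_sq_integrable d k)).mono' (by fun_prop)
    (Filter.Eventually.of_forall fun x => ?_)
  simp only [Pi.add_apply, Real.norm_eq_abs]
  rw [abs_le]
  constructor <;> nlinarith [sq_nonneg (x j + x k), sq_nonneg (x j - x k)]

lemma gauss_second1 : ∫ x : ℝ, x ^ 2 ∂(gaussianReal 0 1) = 1 := by
  have h := variance_id_gaussianReal (μ := 0) (v := 1)
  rw [variance_eq_integral (by fun_prop)] at h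
  simpa [integral_id_gaussianReal] using h

lemma gauss_mul (d : ℕ) (j k : Fin d) :
    ∫ x : Fin d → ℝ, x j * x k ∂(gam d) = if j = k then 1 else 0 := by
  by_cases h : j = k
  · subst h
    simp only [if_true, ← pow_two]
    rw [← gauss_second1]
    rw [← (measurePreserving_eval (fun _ : Fin d => gaussianReal 0 1) j).map_eq,
      integral_map (measurable_pi_apply j).aemeasurable (by fun_prop)]
  · rw [if_neg h]
    have e : ∀ x : Fin d → ℝ, x j * x k = ∏ i, (if i = j ∨ i = k then x i else 1) := by
      intro x
      rw [← Finset.prod_filter, show Finset.univ.filter (fun i => i = j ∨ i = k) = {j, k} by ext; simp,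
        Finset.prod_pair h]
    simp only [e]
    rw [integral_fintype_prod_eq_prod (f := fun i (t : ℝ) => if i = j ∨ i = k then t else 1)]
    refine Finset.prod_eq_zero (Finset.mem_univ j) ?_
    simp [integral_id_gaussianReal]

lemma gauss_lin_sq (d : ℕ) (w : Fin d → ℝ) :
    Integrable (fun x : Fin d → ℝ => (∑ k, w k * x k) ^ 2) (gam d) ∧ 
    ∫ x : Fin d → ℝ, (∑ k, w k * x k) ^ 2 ∂(gam d) = ∑ k, w k ^ 2 := by
  have e : ∀ x : Fin d → ℝ, (∑ k, w k * x k) ^ 2 = ∑ j, ∑ k, (w j * w k) * (x j * x k) := by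
    intro x
    rw [pow_two, Finset.sum_mul_sum]
    exact Finset.sum_congr rfl fun j _ => Finset.sum_congr rfl fun k _ => by ring
  simp only [e]
  refine ⟨integrable_finsetSum _ fun j _ => integrable_finsetSum _ fun k _ =>
    (gauss_mul_integrable d j k).const_mul _, ?_⟩
  rw [integral_finsetSum _ fun j _ => integrable_finsetSum _ fun k _ =>
    (gauss_mul_integrable d j k).const_mul _]
  refine Finset.sum_congr rfl fun j _ => ?_
  rw [integral_finsetSum _ fun k _ => (gauss_mul_integrable d j k).const_mul _]
  simp [integral_const_mul, gauss_mul, pow_two]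

lemma sqrt_le_sum_abs {d : ℕ} (a : Fin d → ℝ) : √(∑ i, a i ^ 2) ≤ ∑ i, |a i| := by
  apply Real.sqrt_le_iff.2
  refine ⟨Finset.sum_nonneg fun i _ => abs_nonneg _, ?_⟩
  have := Finset.sum_sq_le_sq_sum_of_nonneg (s := Finset.univ) (f := fun i => |a i|) (fun i _ => abs_nonneg _)
  simpa using this



lemma interp_ibp {S : Type*} [MeasurableSpace S] (μ : Measure S) [IsProbabilityMeasure μ] {d : ℕ}
    (X : S → Fin d → ℝ) (T : Fin d → Fin d → S → ℝ) (R : ℝ) (hX : Measurable X)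
    (hT : ∀ j k, Measurable (T j k)) (hXb : ∀ᵐ z ∂μ, ∀ j, |X z j| ≤ R)
    (hTb : ∀ᵐ z ∂μ, ∀ j k, |T j k z| ≤ R)
    (hS : ∀ (j : Fin d) (u : (Fin d → ℝ) → ℝ) (D : (Fin d → ℝ) → (Fin d → ℝ) →L[ℝ] ℝ),
      (∀ x, HasFDerivAt u (D x) x) → Continuous D →
      ∫ z, u (X z) * X z j ∂μ = ∫ z, ∑ k, D (X z) (Pi.single k 1) * T j k z ∂μ)
    (j : Fin d) (p : (Fin d → ℝ) → ℝ) (Dp : (Fin d → ℝ) → (Fin d → ℝ) →L[ℝ] ℝ) (C1 C2 : ℝ)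
    (hp : ∀ x, HasFDerivAt p (Dp x) x) (hpc : Continuous Dp) (hb1 : ∀ x, |p x| ≤ C1)
    (hb2 : ∀ k x, |Dp x (Pi.single k 1)| ≤ C2) (s c : ℝ) :
    c * ∫ w, p (s • X w.1 + c • w.2) * X w.1 j ∂(μ.prod (gam d)) =
    s * ∫ w, ∑ k, (T j k w.1 * w.2 k) * p (s • X w.1 + c • w.2) ∂(μ.prod (gam d)) := by
  have hpcont : Continuous p := continuous_iff_continuousAt.2 fun x => (hp x).continuousAt
  have hm1 : Measurable p := hpcont.measurable
  have hm2 : ∀ k, Measurable fun x => Dp x (Pi.single k 1) := fun k =>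
    (hpc.clm_apply continuous_const).measurable
  have hY : Measurable fun w : S × (Fin d → ℝ) => s • X w.1 + c • w.2 := by fun_prop
  have aeX : ∀ᵐ w ∂(μ.prod (gam d)), ∀ j, |X w.1 j| ≤ R :=
    Measure.quasiMeasurePreserving_fst.ae hXb
  have aeT : ∀ᵐ w ∂(μ.prod (gam d)), ∀ j k, |T j k w.1| ≤ R :=
    Measure.quasiMeasurePreserving_fst.ae hTb
  have C1n : 0 ≤ C1 := (abs_nonneg _).trans (hb1 0)
  have C2n : 0 ≤ C2 := (abs_nonneg _).trans (hb2 j 0)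
  have I1 : Integrable (fun w : S × (Fin d → ℝ) => p (s • X w.1 + c • w.2) * X w.1 j) (μ.prod (gam d)) := by
    refine (integrable_const (C1 * R)).mono' (by fun_prop) ?_
    filter_upwards [aeX] with w hw
    rw [norm_mul]
    exact mul_le_mul (hb1 _) (hw j) (norm_nonneg _) C1n
  have I2 : ∀ k, Integrable (fun w : S × (Fin d → ℝ) =>
      Dp (s • X w.1 + c • w.2) (Pi.single k 1) * T j k w.1) (μ.prod (gam d)) := by
    intro k
    have hm := (hm2 k).comp hY
    refine (integrable_const (C2 * R)).mono'
      (hm.mul ((hT j k).comp measurable_fst)).aestronglyMeasurable ?_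
    filter_upwards [aeT] with w hw
    rw [norm_mul]
    exact mul_le_mul (hb2 k _) (hw j k) (norm_nonneg _) C2n
  have I3 : ∀ k, Integrable (fun w : S × (Fin d → ℝ) =>
      (T j k w.1 * w.2 k) * p (s • X w.1 + c • w.2)) (μ.prod (gam d)) := by
    intro k
    refine (((gauss_int_poly d k).comp_snd μ).norm.const_mul (R * C1)).mono' (by fun_prop) ?_
    filter_upwards [aeT] with w hw
    rw [norm_mul, norm_mul, mul_right_comm]
    exact mul_le_mul_of_nonneg_right (mul_le_mul (hw j k) (hb1 _) (norm_nonneg _)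
      ((abs_nonneg _).trans (hw j k))) (norm_nonneg _)
  have e1 : ∫ w, p (s • X w.1 + c • w.2) * X w.1 j ∂(μ.prod (gam d)) =
      s * ∫ w, ∑ k, Dp (s • X w.1 + c • w.2) (Pi.single k 1) * T j k w.1 ∂(μ.prod (gam d)) := by
    rw [integral_prod_symm _ I1, integral_prod_symm _ (integrable_finsetSum _ fun k _ => I2 k),
      ← integral_const_mul]
    congr 1
    ext g
    have h := hS j (fun x => p (s • x + c • g)) (fun x => s • Dp (s • x + c • g)) (fun x => by
      have h1 : HasFDerivAt (fun x : Fin d → ℝ => s • x + c • g)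
          (s • ContinuousLinearMap.id ℝ (Fin d → ℝ)) x :=
        ((hasFDerivAt_id x).const_smul s).add_const _
      refine ((hp _).comp x h1).congr_fderiv ?_
      ext v
      simp) (by fun_prop)
    rw [h, ← integral_const_mul]
    congr 1
    ext z
    simp only [_root_.smul_apply, smul_eq_mul, Finset.mul_sum, mul_assoc]
  have e2 : ∀ k, c * ∫ w, Dp (s • X w.1 + c • w.2) (Pi.single k 1) * T j k w.1 ∂(μ.prod (gam d)) =
      ∫ w, (T j k w.1 * w.2 k) * p (s • X w.1 + c • w.2) ∂(μ.prod (gam d)) := by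
    intro k
    rw [integral_prod _ (I2 k), integral_prod _ (I3 k), ← integral_const_mul]
    congr 1
    ext z
    simp only [mul_assoc]
    rw [integral_mul_const, integral_const_mul, mul_comm (T j k z), ← mul_assoc, ← integral_const_mul]
    congr 1
    have h := gauss_ibp d k (fun g => p (s • X z + c • g)) (fun g => c • Dp (s • X z + c • g)) C1 (|c| * C2)
      (fun x => by
        have h1 : HasFDerivAt (fun x : Fin d → ℝ => s • X z + c • x)
            (c • ContinuousLinearMap.id ℝ (Fin d → ℝ)) x :=
          ((hasFDerivAt_id x).const_smul c).const_add _
        refine ((hp _).comp x h1).congr_fderiv ?_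
        ext v
        simp) (by fun_prop) (fun x => hb1 _) (fun x => by
          simp only [_root_.smul_apply, smul_eq_mul, abs_mul]
          exact mul_le_mul_of_nonneg_left (hb2 k _) (abs_nonneg _))
    rw [h]
    rfl
  rw [e1, integral_finsetSum _ fun k _ => I2 k, integral_finsetSum _ fun k _ => I3 k,
    Finset.sum_congr rfl fun k _ => (e2 k).symm, ← Finset.mul_sum]
  ring

lemma integral_add5 {S : Type*} [MeasurableSpace S] {μ : Measure S} [IsProbabilityMeasure μ]
    {F1 F2 F3 F4 : S → ℝ} {c : ℝ} (h1 : Integrable F1 μ) (h2 : Integrable F2 μ) (h3 : Integrable F3 μ)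
    (h4 : Integrable F4 μ) :
    ∫ w, (F1 w + c + F2 w + F3 w + F4 w) ∂μ =
      ∫ w, F1 w ∂μ + c + ∫ w, F2 w ∂μ + ∫ w, F3 w ∂μ + ∫ w, F4 w ∂μ := by
  have k1 : Integrable (fun w => F1 w + c) μ := h1.add (integrable_const _)
  have k2 : Integrable (fun w => F1 w + c + F2 w) μ := k1.add h2
  have k3 : Integrable (fun w => F1 w + c + F2 w + F3 w) μ := k2.add h3
  rw [integral_add k3 h4, integral_add k2 h3, integral_add k1 h2, integral_add h1 (integrable_const _)]
  simp

/-- pointwise-to-integral bound -/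
lemma interp_bound {S : Type*} [MeasurableSpace S] (μ : Measure S) [IsProbabilityMeasure μ] {d : ℕ}
    (X : S → Fin d → ℝ) (W : Fin d → Fin d → S → ℝ) (R : ℝ) (hX : Measurable X)
    (hW : ∀ j k, Measurable (W j k)) (hXb : ∀ᵐ z ∂μ, ∀ j, |X z j| ≤ R)
    (hWb : ∀ᵐ z ∂μ, ∀ j k, |W j k z| ≤ R)
    (p : Fin d → S × (Fin d → ℝ) → ℝ)
    (hp : ∀ w (v : Fin d → ℝ), |∑ j, p j w * v j| ≤ √(∑ j, v j ^ 2))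
    (K η : ℝ) (hK : 0 < K) (hη : 0 ≤ η) (hWK : ∑ j, ∑ k, ∫ z, W j k z ^ 2 ∂μ ≤ K ^ 2)
    (hXd : ∑ j, ∫ z, X z j ^ 2 ∂μ ≤ d) :
    |∫ w, ∑ j, p j w * (∑ k, W j k w.1 * w.2 k + η * w.2 j - η * (X w.1 j * ∑ k, X w.1 k * w.2 k))
      ∂(μ.prod (gam d))| ≤ K + 2 * η * d := by
  have aeX : ∀ᵐ w ∂(μ.prod (gam d)), ∀ j, |X w.1 j| ≤ R :=
    Measure.quasiMeasurePreserving_fst.ae hXb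
  have aeW : ∀ᵐ w ∂(μ.prod (gam d)), ∀ j k, |W j k w.1| ≤ R :=
    Measure.quasiMeasurePreserving_fst.ae hWb
  -- general: integrals of (Σ_k w_k(z) g_k)^2
  have gen : ∀ v : S → Fin d → ℝ, Measurable v → (∀ᵐ z ∂μ, ∀ j, |v z j| ≤ R) →
      Integrable (fun w : S × (Fin d → ℝ) => (∑ k, v w.1 k * w.2 k) ^ 2) (μ.prod (gam d)) ∧
      ∫ w, (∑ k, v w.1 k * w.2 k) ^ 2 ∂(μ.prod (gam d)) = ∑ k, ∫ z, v z k ^ 2 ∂μ := by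
    intro v hv hvb
    have aev : ∀ᵐ w ∂(μ.prod (gam d)), ∀ j, |v w.1 j| ≤ R :=
      Measure.quasiMeasurePreserving_fst.ae hvb
    have I : Integrable (fun w : S × (Fin d → ℝ) => (∑ k, v w.1 k * w.2 k) ^ 2) (μ.prod (gam d)) := by
      have hI : Integrable (fun w : S × (Fin d → ℝ) => (d : ℝ) * ∑ k, R ^ 2 * w.2 k ^ 2) (μ.prod (gam d)) :=
        (integrable_finsetSum _ fun k _ => ((gauss_sq_integrable d k).comp_snd μ).const_mul _).const_mul _
      refine hI.mono' (by fun_prop) ?_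
      filter_upwards [aev] with w hw
      rw [Real.norm_eq_abs, abs_of_nonneg (sq_nonneg _)]
      have h1 := sq_sum_le_card_mul_sum_sq (s := Finset.univ) (f := fun k => v w.1 k * w.2 k)
      simp only [Finset.card_univ, Fintype.card_fin] at h1
      refine h1.trans (mul_le_mul_of_nonneg_left (Finset.sum_le_sum fun k _ => ?_) (by positivity))
      rw [mul_pow]
      exact mul_le_mul_of_nonneg_right (sq_le_sq' (by linarith [(abs_le.1 (hw k)).1]) (abs_le.1 (hw k)).2)
        (sq_nonneg _)
    refine ⟨I, ?_⟩
    rw [integral_prod _ I]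
    simp only [(gauss_lin_sq d _).2]
    rw [integral_finsetSum]
    intro k _
    refine (integrable_const (R ^ 2)).mono' (by fun_prop) ?_
    filter_upwards [hvb] with z hz
    rw [Real.norm_eq_abs, abs_of_nonneg (sq_nonneg _)]
    exact sq_le_sq' (by linarith [(abs_le.1 (hz k)).1]) (abs_le.1 (hz k)).2
  have gW := fun j => gen (fun z k => W j k z) (by fun_prop) (hWb.mono fun z hz k => hz j k)
  have gX := gen X hX hXb
  have IX : ∀ j, Integrable (fun w : S × (Fin d → ℝ) => X w.1 j ^ 2) (μ.prod (gam d)) := by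
    intro j
    refine (integrable_const (R ^ 2)).mono'
      (((measurable_pi_apply j).comp (hX.comp measurable_fst)).pow_const 2).aestronglyMeasurable ?_
    filter_upwards [aeX] with w hz
    rw [Real.norm_eq_abs, abs_of_nonneg (sq_nonneg _)]
    exact sq_le_sq' (by linarith [(abs_le.1 (hz j)).1]) (abs_le.1 (hz j)).2
  have eX : ∀ j, ∫ w, X w.1 j ^ 2 ∂(μ.prod (gam d)) = ∫ z, X z j ^ 2 ∂μ := by
    intro j
    rw [integral_prod _ (IX j)]; simp
  have Ig : ∀ j, Integrable (fun w : S × (Fin d → ℝ) => w.2 j ^ 2) (μ.prod (gam d)) := fun j =>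
    (gauss_sq_integrable d j).comp_snd μ
  have eg : ∀ j, ∫ w, w.2 j ^ 2 ∂(μ.prod (gam d)) = 1 := by
    intro j
    rw [integral_prod _ (Ig j)]
    have := gauss_mul d j j
    simp only [if_true, ← pow_two] at this
    simp [this]
  let bd : S × (Fin d → ℝ) → ℝ := fun w =>
    (K⁻¹ / 2) * (∑ j, (∑ k, W j k w.1 * w.2 k) ^ 2) + K / 2
      + (η / 2) * (∑ j, (1 + w.2 j ^ 2)) + (η / 2) * (∑ j, X w.1 j ^ 2)
      + (η / 2) * (∑ k, X w.1 k * w.2 k) ^ 2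
  have hbd : ∀ w, ‖∑ j, p j w * (∑ k, W j k w.1 * w.2 k + η * w.2 j - η * (X w.1 j * ∑ k, X w.1 k * w.2 k))‖
      ≤ bd w := by
    intro w
    have e : ∑ j, p j w * (∑ k, W j k w.1 * w.2 k + η * w.2 j - η * (X w.1 j * ∑ k, X w.1 k * w.2 k))
      = ∑ j, p j w * (∑ k, W j k w.1 * w.2 k) + η * ∑ j, p j w * w.2 j
        - η * ((∑ j, p j w * X w.1 j) * ∑ k, X w.1 k * w.2 k) := by
      rw [Finset.mul_sum, Finset.sum_mul, Finset.mul_sum, ← Finset.sum_add_distrib, ← Finset.sum_sub_distrib]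
      exact Finset.sum_congr rfl fun j _ => by ring
    rw [e, Real.norm_eq_abs]
    have h1 := hp w (fun j => ∑ k, W j k w.1 * w.2 k)
    have h2 := hp w w.2
    have h3 := hp w (X w.1)
    have n1 : 0 ≤ ∑ j, (∑ k, W j k w.1 * w.2 k) ^ 2 := Finset.sum_nonneg fun j _ => sq_nonneg _
    have n3 : 0 ≤ ∑ j, X w.1 j ^ 2 := Finset.sum_nonneg fun j _ => sq_nonneg _
    set Q := ∑ j, (∑ k, W j k w.1 * w.2 k) ^ 2 with hQ
    have h1' : √Q ≤ K⁻¹ / 2 * Q + K / 2 := by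
      have := Real.sq_sqrt n1
      rw [← sub_nonneg, show K⁻¹ / 2 * Q + K / 2 - √Q = K⁻¹ / 2 * (√Q - K) ^ 2 by
        nth_rw 1 [← this]; field_simp; ring]
      positivity
    have h2' : √(∑ j, w.2 j ^ 2) ≤ 1 / 2 * ∑ j, (1 + w.2 j ^ 2) := by
      refine (sqrt_le_sum_abs _).trans ?_
      rw [Finset.mul_sum]
      refine Finset.sum_le_sum fun j _ => ?_
      nlinarith [sq_abs (w.2 j), sq_nonneg (|w.2 j| - 1)]
    have h3' : |(∑ j, p j w * X w.1 j) * ∑ k, X w.1 k * w.2 k| ≤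
        1 / 2 * (∑ j, X w.1 j ^ 2) + 1 / 2 * (∑ k, X w.1 k * w.2 k) ^ 2 := by
      rw [abs_mul]
      set q := ∑ k, X w.1 k * w.2 k
      have := Real.sq_sqrt n3
      have : |∑ j, p j w * X w.1 j| * |q| ≤ √(∑ j, X w.1 j ^ 2) * |q| :=
        mul_le_mul_of_nonneg_right h3 (abs_nonneg _)
      nlinarith [sq_nonneg (√(∑ j, X w.1 j ^ 2) - |q|), sq_abs q]
    refine (abs_sub _ _).trans ?_
    refine (add_le_add (abs_add_le _ _) le_rfl).trans ?_
    rw [abs_mul, abs_mul, abs_of_nonneg hη]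
    have m2 := mul_le_mul_of_nonneg_left (h2.trans h2') hη
    have m3 := mul_le_mul_of_nonneg_left h3' hη
    simp only [bd]
    have m1 := h1.trans h1'
    linarith
  have J1 : Integrable (fun w : S × (Fin d → ℝ) => (K⁻¹ / 2) * (∑ j, (∑ k, W j k w.1 * w.2 k) ^ 2)) (μ.prod (gam d)) :=
    (integrable_finsetSum _ fun j _ => (gW j).1).const_mul _
  have J2 : Integrable (fun w : S × (Fin d → ℝ) => (η / 2) * (∑ j, (1 + w.2 j ^ 2))) (μ.prod (gam d)) :=
    (integrable_finsetSum _ fun j _ => (integrable_const _).add (Ig j)).const_mul _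
  have J3 : Integrable (fun w : S × (Fin d → ℝ) => (η / 2) * (∑ j, X w.1 j ^ 2)) (μ.prod (gam d)) :=
    (integrable_finsetSum _ fun j _ => IX j).const_mul _
  have J4 : Integrable (fun w : S × (Fin d → ℝ) => (η / 2) * (∑ k, X w.1 k * w.2 k) ^ 2) (μ.prod (gam d)) :=
    gX.1.const_mul _
  have hI : Integrable bd (μ.prod (gam d)) := (((J1.add (integrable_const _)).add J2).add J3).add J4
  refine (norm_integral_le_of_norm_le hI (Filter.Eventually.of_forall hbd)).trans ?_
  have : ∫ w, bd w ∂(μ.prod (gam d)) = (K⁻¹ / 2) * (∑ j, ∑ k, ∫ z, W j k z ^ 2 ∂μ) + K / 2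
      + (η / 2) * (∑ j : Fin d, (1 + 1)) + (η / 2) * (∑ j, ∫ z, X z j ^ 2 ∂μ)
      + (η / 2) * (∑ j, ∫ z, X z j ^ 2 ∂μ) := by
    simp only [bd]
    rw [integral_add5 J1 J2 J3 J4,
      integral_const_mul, integral_const_mul, integral_const_mul, integral_const_mul,
      integral_finsetSum _ fun j _ => (gW j).1, integral_finsetSum _ fun j _ => IX j,
      gX.2]
    have e5 : ∫ w, ∑ j : Fin d, (1 + w.2 j ^ 2) ∂(μ.prod (gam d)) = ∑ j : Fin d, (1 + 1) := by
      rw [integral_finsetSum _ fun j _ => ?_]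
      · refine Finset.sum_congr rfl fun j _ => ?_
        rw [integral_add (integrable_const _) (Ig j), eg]; simp
      · exact (integrable_const (1 : ℝ)).add (Ig j)
    rw [e5]
    simp only [eX, (gW _).2]
  rw [this]
  simp only [Finset.sum_const, Finset.card_univ, Fintype.card_fin, nsmul_eq_mul]
  have m1 : K⁻¹ / 2 * (∑ j, ∑ k, ∫ z, W j k z ^ 2 ∂μ) ≤ K / 2 := by
    calc _ ≤ K⁻¹ / 2 * K ^ 2 := mul_le_mul_of_nonneg_left hWK (by positivity)
      _ = K / 2 := by field_simp
  have m2 := mul_le_mul_of_nonneg_left hXd (by positivity : 0 ≤ η / 2)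
  linarith



lemma integral_sum_sub {S : Type*} [MeasurableSpace S] {μ : Measure S} {d : ℕ} {F G : Fin d → S → ℝ}
    (h1 : ∀ j, Integrable (F j) μ) (h2 : ∀ j, Integrable (G j) μ) :
    ∫ w, ∑ j, (F j w - G j w) ∂μ = ∑ j, (∫ w, F j w ∂μ - ∫ w, G j w ∂μ) := by
  have h3 : ∀ j, Integrable (fun w => F j w - G j w) μ := fun j => (h1 j).sub (h2 j)
  rw [integral_finsetSum _ fun j _ => h3 j]
  exact Finset.sum_congr rfl fun j _ => integral_sub (h1 j) (h2 j)

lemma smooth_bound {S : Type*} [MeasurableSpace S] (μ : Measure S) [IsProbabilityMeasure μ] {d : ℕ}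
    (X : S → Fin d → ℝ) (T W : Fin d → Fin d → S → ℝ) (R : ℝ) (hX : Measurable X)
    (hT : ∀ j k, Measurable (T j k)) (hXb : ∀ᵐ z ∂μ, ∀ j, |X z j| ≤ R)
    (hTb : ∀ᵐ z ∂μ, ∀ j k, |T j k z| ≤ R)
    (hW : ∀ j k, Measurable (W j k)) (hWb : ∀ᵐ z ∂μ, ∀ j k, |W j k z| ≤ R)
    (hS : ∀ (j : Fin d) (u : (Fin d → ℝ) → ℝ) (D : (Fin d → ℝ) → (Fin d → ℝ) →L[ℝ] ℝ),
      (∀ x, HasFDerivAt u (D x) x) → Continuous D →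
      ∫ z, u (X z) * X z j ∂μ = ∫ z, ∑ k, D (X z) (Pi.single k 1) * T j k z ∂μ)
    (K η : ℝ) (hK : 0 < K) (hη : 0 ≤ η) (hWK : ∑ j, ∑ k, ∫ z, W j k z ^ 2 ∂μ ≤ K ^ 2)
    (hXd : ∑ j, ∫ z, X z j ^ 2 ∂μ ≤ d)
    (hTW : ∀ j k z, T j k z = (if j = k then 1 else 0) + W j k z + η * (if j = k then 1 else 0)
      - η * (X z j * X z k))
    (f : (Fin d → ℝ) → ℝ) (Df : (Fin d → ℝ) → (Fin d → ℝ) →L[ℝ] ℝ)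
    (D2 : Fin d → (Fin d → ℝ) → (Fin d → ℝ) →L[ℝ] ℝ) (C2 : ℝ)
    (hf : ∀ x, HasFDerivAt f (Df x) x)
    (hf2 : ∀ j x, HasFDerivAt (fun y => Df y (Pi.single j 1)) (D2 j x) x)
    (hD2c : ∀ j, Continuous (D2 j)) (hDfb : ∀ x v, |Df x v| ≤ √(∑ j, v j ^ 2))
    (h2b : ∀ j k x, |D2 j x (Pi.single k 1)| ≤ C2)
    (hfl : ∀ x y, |f x - f y| ≤ √(∑ i, (x i - y i) ^ 2)) :
    |∫ z, f (X z) ∂μ - ∫ x, f x ∂(gam d)| ≤ 2 * (K + 2 * η * d) := by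
  have hfc : Continuous f := continuous_iff_continuousAt.2 fun x => (hf x).continuousAt
  have hfm := hfc.measurable
  have hpc : ∀ j, Continuous fun y => Df y (Pi.single j 1) := fun j =>
    continuous_iff_continuousAt.2 fun x => (hf2 j x).continuousAt
  have hpm := fun j => (hpc j).measurable
  have hp1 : ∀ j x, |Df x (Pi.single j 1)| ≤ 1 := by
    intro j x
    refine (hDfb x _).trans ?_
    rw [Finset.sum_eq_single j]
    · simp
    · intro b _ hb; simp [Pi.single_eq_of_ne hb]
    · simp
  have aeX : ∀ᵐ w ∂(μ.prod (gam d)), ∀ j, |X w.1 j| ≤ R :=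
    Measure.quasiMeasurePreserving_fst.ae hXb
  have aeT : ∀ᵐ w ∂(μ.prod (gam d)), ∀ j k, |T j k w.1| ≤ R :=
    Measure.quasiMeasurePreserving_fst.ae hTb
  let bd : S × (Fin d → ℝ) → ℝ := fun w => ∑ j, (R + |w.2 j|)
  have Ibd : Integrable bd (μ.prod (gam d)) :=
    integrable_finsetSum _ fun j _ => (integrable_const _).add ((gauss_int_poly d j).comp_snd μ).norm
  have key : ∀ (s c : ℝ), |s| ≤ 1 → |c| ≤ 1 → ∀ w : S × (Fin d → ℝ), (∀ j, |X w.1 j| ≤ R) →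
      √(∑ j, (s • X w.1 + c • w.2) j ^ 2) ≤ bd w := by
    intro s c hs hc w hw
    refine (sqrt_le_sum_abs _).trans (Finset.sum_le_sum fun j _ => ?_)
    simp only [Pi.add_apply, Pi.smul_apply, smul_eq_mul]
    refine (abs_add_le _ _).trans (add_le_add ?_ ?_)
    · rw [abs_mul]
      exact (mul_le_of_le_one_left (abs_nonneg _) hs).trans (hw j)
    · rw [abs_mul]
      exact mul_le_of_le_one_left (abs_nonneg _) hc
  let F : ℝ → S × (Fin d → ℝ) → ℝ := fun θ w => f (Real.sin θ • X w.1 + Real.cos θ • w.2)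
  let F' : ℝ → S × (Fin d → ℝ) → ℝ := fun θ w =>
    Df (Real.sin θ • X w.1 + Real.cos θ • w.2) (Real.cos θ • X w.1 + (-Real.sin θ) • w.2)
  have hFm : ∀ θ, Measurable (F θ) := fun θ => by
    have : Measurable fun w : S × (Fin d → ℝ) => Real.sin θ • X w.1 + Real.cos θ • w.2 := by fun_prop
    exact hfm.comp this
  have hYm : ∀ θ, Measurable fun w : S × (Fin d → ℝ) => Real.sin θ • X w.1 + Real.cos θ • w.2 :=
    fun θ => by fun_prop
  have hXj : ∀ j, Measurable fun w : S × (Fin d → ℝ) => X w.1 j := fun j =>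
    (measurable_pi_apply j).comp (hX.comp measurable_fst)
  have hgj : ∀ j, Measurable fun w : S × (Fin d → ℝ) => w.2 j := fun j =>
    (measurable_pi_apply j).comp measurable_snd
  have hF'e : ∀ θ w, F' θ w = ∑ j, (Real.cos θ * (Df (Real.sin θ • X w.1 + Real.cos θ • w.2) (Pi.single j 1) * X w.1 j)
      - Real.sin θ * (Df (Real.sin θ • X w.1 + Real.cos θ • w.2) (Pi.single j 1) * w.2 j)) := by
    intro θ w
    simp only [F']
    rw [clm_expand]
    refine Finset.sum_congr rfl fun j _ => ?_
    simp only [Pi.add_apply, Pi.smul_apply, smul_eq_mul]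
    ring
  have hF'm : ∀ θ, Measurable (F' θ) := fun θ => by
    rw [funext (hF'e θ)]
    refine Finset.measurable_sum _ fun j _ => ?_
    exact ((((hpm j).comp (hYm θ)).mul (hXj j)).const_mul _).sub
      ((((hpm j).comp (hYm θ)).mul (hgj j)).const_mul _)
  have hFi : ∀ θ, Integrable (F θ) (μ.prod (gam d)) := by
    intro θ
    refine ((integrable_const |f 0|).add Ibd).mono' (hFm θ).aestronglyMeasurable ?_
    filter_upwards [aeX] with w hw
    have h1 := (hfl (Real.sin θ • X w.1 + Real.cos θ • w.2) 0)
    simp only [Pi.zero_apply, sub_zero] at h1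
    have h2 := h1.trans (key _ _ (Real.abs_sin_le_one θ) (Real.abs_cos_le_one θ) w hw)
    rw [Real.norm_eq_abs]
    have h3 := abs_add_le (F θ w - f 0) (f 0)
    rw [sub_add_cancel] at h3
    simp only [Pi.add_apply]
    have : |F θ w - f 0| ≤ bd w := h2
    linarith
  have hder : ∀ θ, HasDerivAt (fun θ => ∫ w, F θ w ∂(μ.prod (gam d))) (∫ w, F' θ w ∂(μ.prod (gam d))) θ := by
    intro θ
    refine (hasDerivAt_integral_of_dominated_loc_of_deriv_le (F := F) (F' := F') (bound := bd)
      (s := Set.univ) Filter.univ_mem (Filter.Eventually.of_forall fun t => (hFm t).aestronglyMeasurable)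
      (hFi θ) (hF'm θ).aestronglyMeasurable ?_ Ibd ?_).2
    · filter_upwards [aeX] with w hw t _
      refine (hDfb _ _).trans (key _ _ (Real.abs_cos_le_one t) ?_ w hw)
      rw [abs_neg]; exact Real.abs_sin_le_one t
    · refine Filter.Eventually.of_forall fun w t _ => ?_
      have h1 : HasDerivAt (fun θ : ℝ => Real.sin θ • X w.1 + Real.cos θ • w.2)
          (Real.cos t • X w.1 + (-Real.sin t) • w.2) t :=
        ((Real.hasDerivAt_sin t).smul_const _).add ((Real.hasDerivAt_cos t).smul_const _)
      exact (hf _).comp_hasDerivAt t h1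
  have hbnd : ∀ θ, ‖∫ w, F' θ w ∂(μ.prod (gam d))‖ ≤ K + 2 * η * d := by
    intro θ
    have I1 : ∀ j, Integrable (fun w : S × (Fin d → ℝ) =>
        Df (Real.sin θ • X w.1 + Real.cos θ • w.2) (Pi.single j 1) * X w.1 j) (μ.prod (gam d)) := by
      intro j
      refine (integrable_const R).mono' (((hpm j).comp (hYm θ)).mul (hXj j)).aestronglyMeasurable ?_
      filter_upwards [aeX] with w hw
      rw [norm_mul]
      exact (mul_le_of_le_one_left (abs_nonneg _) (hp1 j _)).trans (hw j)
    have I2 : ∀ j, Integrable (fun w : S × (Fin d → ℝ) =>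
        Df (Real.sin θ • X w.1 + Real.cos θ • w.2) (Pi.single j 1) * w.2 j) (μ.prod (gam d)) := by
      intro j
      refine ((gauss_int_poly d j).comp_snd μ).norm.mono' (((hpm j).comp (hYm θ)).mul (hgj j)).aestronglyMeasurable ?_
      refine Filter.Eventually.of_forall fun w => ?_
      rw [norm_mul]
      exact (mul_le_of_le_one_left (abs_nonneg _) (hp1 j _))
    have I3 : ∀ j, Integrable (fun w : S × (Fin d → ℝ) =>
        ∑ k, (T j k w.1 * w.2 k) * Df (Real.sin θ • X w.1 + Real.cos θ • w.2) (Pi.single j 1)) (μ.prod (gam d)) := by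
      intro j
      refine integrable_finsetSum _ fun k _ => ?_
      refine (((gauss_int_poly d k).comp_snd μ).norm.const_mul R).mono'
        ((((hT j k).comp measurable_fst).mul (hgj k)).mul ((hpm j).comp (hYm θ))).aestronglyMeasurable ?_
      filter_upwards [aeT] with w hw
      rw [norm_mul, norm_mul]
      refine (mul_le_of_le_one_right (by positivity) (hp1 j _)).trans ?_
      exact mul_le_mul_of_nonneg_right (hw j k) (norm_nonneg _)
    have e : ∫ w, F' θ w ∂(μ.prod (gam d)) = Real.sin θ *
        ∫ w, ∑ j, Df (Real.sin θ • X w.1 + Real.cos θ • w.2) (Pi.single j 1) *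
          (∑ k, W j k w.1 * w.2 k + η * w.2 j - η * (X w.1 j * ∑ k, X w.1 k * w.2 k)) ∂(μ.prod (gam d)) := by
      have e1 : ∫ w, F' θ w ∂(μ.prod (gam d)) = ∑ j, (Real.sin θ * (∫ w,
          ∑ k, (T j k w.1 * w.2 k) * Df (Real.sin θ • X w.1 + Real.cos θ • w.2) (Pi.single j 1) ∂(μ.prod (gam d)))
          - Real.sin θ * ∫ w, Df (Real.sin θ • X w.1 + Real.cos θ • w.2) (Pi.single j 1) * w.2 j ∂(μ.prod (gam d))) := by
        simp only [hF'e θ]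
        rw [integral_sum_sub (fun j => (I1 j).const_mul _) (fun j => (I2 j).const_mul _)]
        refine Finset.sum_congr rfl fun j _ => ?_
        rw [integral_const_mul, integral_const_mul]
        congr 1
        exact interp_ibp μ X T R hX hT hXb hTb hS j (fun y => Df y (Pi.single j 1)) (D2 j) 1 C2 (hf2 j) (hD2c j)
          (hp1 j) (h2b j) _ _
      rw [e1]
      simp only [← mul_sub]
      rw [← Finset.mul_sum]
      congr 1
      rw [← integral_sum_sub I3 I2]
      congr 1
      ext w
      refine Finset.sum_congr rfl fun j _ => ?_
      rw [← Finset.sum_mul, mul_comm, ← mul_sub]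
      congr 1
      simp only [hTW, add_mul, sub_mul, Finset.sum_add_distrib, Finset.sum_sub_distrib, ite_mul, one_mul,
        zero_mul, mul_ite, mul_one, mul_zero, Finset.sum_ite_eq, Finset.mem_univ, if_true, Finset.mul_sum]
      have : ∀ k, η * (X w.1 j * X w.1 k) * w.2 k = η * (X w.1 j * (X w.1 k * w.2 k)) := fun k => by ring
      simp only [this]
      ring
    rw [e, norm_mul]
    refine (mul_le_of_le_one_left (norm_nonneg _) (Real.abs_sin_le_one θ)).trans ?_
    refine interp_bound μ X W R hX hW hXb hWb
      (fun j w => Df (Real.sin θ • X w.1 + Real.cos θ • w.2) (Pi.single j 1)) ?_ K η hK hη hWK hXd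
    intro w v
    rw [← clm_expand]
    exact hDfb _ _
  have mv := Convex.norm_image_sub_le_of_norm_hasDerivWithin_le (s := Set.univ) (x := 0) (y := Real.pi / 2)
    (fun θ _ => (hder θ).hasDerivWithinAt) (fun θ _ => hbnd θ) convex_univ (Set.mem_univ _) (Set.mem_univ _)
  have e0 : ∫ w, F 0 w ∂(μ.prod (gam d)) = ∫ x, f x ∂(gam d) := by
    rw [integral_prod _ (hFi 0)]
    simp [F]
  have e1 : ∫ w, F (Real.pi / 2) w ∂(μ.prod (gam d)) = ∫ z, f (X z) ∂μ := by
    rw [integral_prod _ (hFi _)]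
    simp [F]
  rw [e0, e1, sub_zero, Real.norm_eq_abs, Real.norm_eq_abs, abs_of_pos (by positivity : 0 < Real.pi / 2)] at mv
  refine mv.trans ?_
  rw [mul_comm]
  exact mul_le_mul_of_nonneg_right (by linarith [Real.pi_le_four]) (by positivity)



lemma conv_diff {G E F : Type*} [NormedAddCommGroup G] [MeasurableSpace G] [BorelSpace G]
    [NormedAddCommGroup E] [NormedSpace ℝ E] [NormedAddCommGroup F] [NormedSpace ℝ F]
    (μ : Measure G) [IsFiniteMeasureOnCompacts μ]
    (L : E →L[ℝ] ℝ →L[ℝ] F) (u : G → E) (g : G → ℝ)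
    (hu : Continuous u) (hus : HasCompactSupport u) (hg : Continuous g) (x y : G) (c : ℝ)
    (hc : ∀ t, |g (x - t) - g (y - t)| ≤ c) :
    ‖convolution u g L μ x - convolution u g L μ y‖ ≤ ‖L‖ * (∫ t, ‖u t‖ ∂μ) * c := by
  have I : ∀ z, Integrable (fun t => L (u t) (g (z - t))) μ := by
    intro z
    refine Continuous.integrable_of_hasCompactSupport (by fun_prop) ?_
    refine hus.mono fun t ht => ?_
    contrapose! ht
    simp only [Function.mem_support, not_not] at ht ⊢
    simp [ht]
  have Iu : Integrable (fun t => ‖u t‖) μ := (hu.integrable_of_hasCompactSupport hus).norm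
  simp only [convolution_def]
  rw [← integral_sub (I x) (I y), mul_assoc, ← integral_mul_const, ← integral_const_mul]
  refine norm_integral_le_of_norm_le ((Iu.mul_const c).const_mul ‖L‖) (Filter.Eventually.of_forall fun t => ?_)
  rw [← map_sub, ← mul_assoc]
  exact (L.le_opNorm₂ _ _).trans (mul_le_mul_of_nonneg_left (hc t) (by positivity))

lemma conv_lip {G E F : Type*} [NormedAddCommGroup G] [MeasurableSpace G] [BorelSpace G]
    [NormedAddCommGroup E] [NormedSpace ℝ E] [NormedAddCommGroup F] [NormedSpace ℝ F]
    (μ : Measure G) [IsFiniteMeasureOnCompacts μ]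
    (L : E →L[ℝ] ℝ →L[ℝ] F) (u : G → E) (g : G → ℝ)
    (hu : Continuous u) (hus : HasCompactSupport u) (hg : Continuous g) (k : ℝ) (hk : 0 ≤ k)
    (hc : ∀ x y, |g x - g y| ≤ k * ‖x - y‖) :
    ∃ C : ℝ, 0 ≤ C ∧ ∀ x y, ‖convolution u g L μ x - convolution u g L μ y‖ ≤ C * ‖x - y‖ := by
  refine ⟨‖L‖ * (∫ t, ‖u t‖ ∂μ) * k, by positivity, fun x y => ?_⟩
  rw [mul_assoc _ k]
  refine conv_diff μ L u g hu hus hg x y _ fun t => ?_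
  simpa using hc (x - t) (y - t)

lemma smoothing {d : ℕ} (f : (Fin d → ℝ) → ℝ) (hfl : ∀ x y, |f x - f y| ≤ √(∑ i, (x i - y i) ^ 2))
    (ε : ℝ) (hε : 0 < ε) :
    ∃ (h : (Fin d → ℝ) → ℝ) (Df : (Fin d → ℝ) → (Fin d → ℝ) →L[ℝ] ℝ)
      (D2 : Fin d → (Fin d → ℝ) → (Fin d → ℝ) →L[ℝ] ℝ) (C2 : ℝ),
      (∀ x, HasFDerivAt h (Df x) x) ∧
      (∀ j x, HasFDerivAt (fun y => Df y (Pi.single j 1)) (D2 j x) x) ∧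
      (∀ j, Continuous (D2 j)) ∧ (∀ x v, |Df x v| ≤ √(∑ j, v j ^ 2)) ∧
      (∀ j k x, |D2 j x (Pi.single k 1)| ≤ C2) ∧
      (∀ x y, |h x - h y| ≤ √(∑ i, (x i - y i) ^ 2)) ∧ ∀ x, |h x - f x| ≤ ε := by
  have hsup : ∀ v : Fin d → ℝ, √(∑ i, v i ^ 2) ≤ d * ‖v‖ := by
    intro v
    refine (sqrt_le_sum_abs _).trans ?_
    calc ∑ j, |v j| ≤ ∑ j : Fin d, ‖v‖ := Finset.sum_le_sum fun j _ => norm_le_pi_norm v j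
      _ = d * ‖v‖ := by simp
  have hlip : ∀ x y, |f x - f y| ≤ d * ‖x - y‖ := fun x y => (hfl x y).trans (hsup (x - y))
  have hfc : Continuous f := by
    have : LipschitzWith d f := LipschitzWith.of_dist_le_mul fun x y => by
      rw [dist_eq_norm, dist_eq_norm]; simpa using hlip x y
    exact this.continuous
  have hfli : LocallyIntegrable f (volume : Measure (Fin d → ℝ)) := hfc.locallyIntegrable
  let δ : ℝ := ε / (d + 1)
  have hδ : 0 < δ := by positivity
  let φ : ContDiffBump (0 : Fin d → ℝ) := ⟨δ / 2, δ, by positivity, by linarith⟩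
  let ψ : (Fin d → ℝ) → ℝ := φ.normed volume
  have hψc : ContDiff ℝ 2 ψ := φ.contDiff_normed
  have hψs : HasCompactSupport ψ := φ.hasCompactSupport_normed
  let L : ℝ →L[ℝ] ℝ →L[ℝ] ℝ := ContinuousLinearMap.lsmul ℝ ℝ
  let h : (Fin d → ℝ) → ℝ := convolution ψ f L volume
  have hh : ContDiff ℝ 2 h := HasCompactSupport.contDiff_convolution_left L hψs hψc hfli
  have hd : Differentiable ℝ h := hh.differentiable (by norm_num)
  have hD1 : ContDiff ℝ 1 (fderiv ℝ h) := hh.fderiv_right (by norm_num)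
  have hLn : ‖L‖ ≤ 1 := ContinuousLinearMap.opNorm_lsmul_le
  have hψ1 : ∫ t, ‖ψ t‖ = 1 := by
    rw [← φ.integral_normed (μ := (volume : Measure (Fin d → ℝ)))]
    congr 1
    ext t
    exact Real.norm_of_nonneg (φ.nonneg_normed t)
  have hhl : ∀ x y, |h x - h y| ≤ √(∑ i, (x i - y i) ^ 2) := by
    intro x y
    have := conv_diff (volume : Measure (Fin d → ℝ)) L ψ f hψc.continuous hψs hfc x y
      (√(∑ i, (x i - y i) ^ 2)) (fun t => by simpa using hfl (x - t) (y - t))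
    rw [hψ1, mul_one] at this
    exact this.trans (mul_le_of_le_one_left (Real.sqrt_nonneg _) hLn)
  have hDl : ∃ C : ℝ, 0 ≤ C ∧ ∀ x y, ‖fderiv ℝ h x - fderiv ℝ h y‖ ≤ C * ‖x - y‖ := by
    have e : ∀ x, fderiv ℝ h x = convolution (fderiv ℝ ψ) f (L.precompL (Fin d → ℝ)) volume x := fun x =>
      (HasCompactSupport.hasFDerivAt_convolution_left L hψs (hψc.of_le (by norm_num)) hfli x).fderiv
    simp only [e]
    exact conv_lip volume _ _ f ((hψc.continuous_fderiv (by norm_num))) (hψs.fderiv ℝ) hfc d (by positivity) hlip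
  obtain ⟨C, hC, hDl⟩ := hDl
  refine ⟨h, fderiv ℝ h, fun j x => (ContinuousLinearMap.apply ℝ ℝ (Pi.single j 1)).comp
    (fderiv ℝ (fderiv ℝ h) x), C, fun x => (hd x).hasFDerivAt, ?_, ?_, ?_, ?_, hhl, ?_⟩
  · intro j x
    exact (ContinuousLinearMap.apply ℝ ℝ (Pi.single j 1)).hasFDerivAt.comp x
      ((hD1.differentiable (by norm_num)) x).hasFDerivAt
  · intro j
    exact continuous_const.clm_comp (hD1.continuous_fderiv (by norm_num))
  · intro x v
    have h1 : HasDerivAt (fun t : ℝ => x + t • v) v 0 := by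
      simpa using ((hasDerivAt_id (0 : ℝ)).smul_const v).const_add x
    have h2 : HasDerivAt (fun t : ℝ => h (x + t • v)) (fderiv ℝ h x v) 0 := by
      have := (hd (x + (0 : ℝ) • v)).hasFDerivAt.comp_hasDerivAt (0 : ℝ) h1
      simp only [zero_smul, add_zero] at this
      exact this
    have := h2.le_of_lip' (C := √(∑ j, v j ^ 2)) (Real.sqrt_nonneg _) (Filter.Eventually.of_forall fun t => by
      refine (hhl _ _).trans (le_of_eq ?_)
      have e : ∀ i, (x + t • v) i - (x + (0 : ℝ) • v) i = t * v i := fun i => by simp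
      simp only [e, mul_pow, sub_zero]
      rw [← Finset.mul_sum, Real.sqrt_mul (sq_nonneg _), Real.sqrt_sq_eq_abs, mul_comm]
      rfl)
    exact this
  · intro j k x
    have h1 : ‖fderiv ℝ (fderiv ℝ h) x‖ ≤ C :=
      norm_fderiv_le_of_lip' ℝ hC (Filter.Eventually.of_forall fun y => hDl y x)
    have h2 : ∀ i : Fin d, ‖(Pi.single i 1 : Fin d → ℝ)‖ = 1 := fun i => by
      rw [Pi.norm_single]; simp
    have h3 := (fderiv ℝ (fderiv ℝ h) x (Pi.single k 1)).le_opNorm (Pi.single j 1)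
    have h4 := (fderiv ℝ (fderiv ℝ h) x).le_opNorm (Pi.single k 1)
    rw [h2, mul_one] at h3 h4
    exact h3.trans (h4.trans h1)
  · intro x
    have := φ.dist_normed_convolution_le (μ := (volume : Measure (Fin d → ℝ))) (g := f) (x₀ := x) (ε := ε)
      hfc.aestronglyMeasurable (fun y hy => by
        rw [Real.dist_eq]
        refine (hlip y x).trans ?_
        have hy' : ‖y - x‖ ≤ δ := by
          rw [Metric.mem_ball, dist_eq_norm] at hy; exact hy.le
        calc d * ‖y - x‖ ≤ d * δ := mul_le_mul_of_nonneg_left hy' (by positivity)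
          _ ≤ (d + 1) * δ := by nlinarith
          _ = ε := by simp only [δ]; field_simp)
    rwa [Real.dist_eq] at this



lemma lip_core {d : ℕ} {S : Type*} [MeasurableSpace S] (μ : Measure S) [IsProbabilityMeasure μ]
    (X : S → Fin d → ℝ) (hX : Measurable X) (R : ℝ) (hXb : ∀ᵐ z ∂μ, ∀ j, |X z j| ≤ R)
    (b : ℝ)
    (hs : ∀ (f : (Fin d → ℝ) → ℝ) (Df : (Fin d → ℝ) → (Fin d → ℝ) →L[ℝ] ℝ)
      (D2 : Fin d → (Fin d → ℝ) → (Fin d → ℝ) →L[ℝ] ℝ) (C2 : ℝ),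
      (∀ x, HasFDerivAt f (Df x) x) →
      (∀ j x, HasFDerivAt (fun y => Df y (Pi.single j 1)) (D2 j x) x) →
      (∀ j, Continuous (D2 j)) → (∀ x v, |Df x v| ≤ √(∑ j, v j ^ 2)) →
      (∀ j k x, |D2 j x (Pi.single k 1)| ≤ C2) →
      (∀ x y, |f x - f y| ≤ √(∑ i, (x i - y i) ^ 2)) →
      |∫ z, f (X z) ∂μ - ∫ x, f x ∂(gam d)| ≤ b)
    (f : (Fin d → ℝ) → ℝ) (hf : ∀ x y, |f x - f y| ≤ √(∑ i, (x i - y i) ^ 2)) :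
    |∫ z, f (X z) ∂μ - ∫ x, f x ∂(gam d)| ≤ b := by
  have hcont : ∀ f : (Fin d → ℝ) → ℝ, (∀ x y, |f x - f y| ≤ √(∑ i, (x i - y i) ^ 2)) → Continuous f := by
    intro f hf
    have : LipschitzWith d f := LipschitzWith.of_dist_le_mul fun x y => by
      rw [dist_eq_norm, dist_eq_norm]
      refine (hf x y).trans ((sqrt_le_sum_abs _).trans ?_)
      calc ∑ j, |x j - y j| ≤ ∑ j : Fin d, ‖x - y‖ := Finset.sum_le_sum fun j _ => norm_le_pi_norm (x - y) j
        _ = d * ‖x - y‖ := by simp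
    exact this.continuous
  have hbd : ∀ f : (Fin d → ℝ) → ℝ, (∀ x y, |f x - f y| ≤ √(∑ i, (x i - y i) ^ 2)) →
      ∀ x, ‖f x‖ ≤ |f 0| + ∑ j, |x j| := by
    intro f hf x
    have h1 := (hf x 0).trans (sqrt_le_sum_abs _)
    simp only [Pi.zero_apply, sub_zero] at h1
    have h3 := abs_add_le (f x - f 0) (f 0)
    rw [sub_add_cancel] at h3
    rw [Real.norm_eq_abs]
    linarith
  have hig : ∀ f : (Fin d → ℝ) → ℝ, (∀ x y, |f x - f y| ≤ √(∑ i, (x i - y i) ^ 2)) → Integrable f (gam d) := by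
    intro f hf
    have I : Integrable (fun x : Fin d → ℝ => |f 0| + ∑ j, |x j|) (gam d) :=
      (integrable_const _).add (integrable_finsetSum _ fun j _ => (gauss_int_poly d j).norm)
    exact I.mono' (hcont f hf).aestronglyMeasurable (Filter.Eventually.of_forall (hbd f hf))
  have hix : ∀ f : (Fin d → ℝ) → ℝ, (∀ x y, |f x - f y| ≤ √(∑ i, (x i - y i) ^ 2)) →
      Integrable (fun z => f (X z)) μ := by
    intro f hf
    refine (integrable_const (|f 0| + ∑ j : Fin d, R)).mono'
      ((hcont f hf).measurable.comp hX).aestronglyMeasurable ?_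
    filter_upwards [hXb] with z hz
    exact (hbd f hf _).trans (by gcongr with j _; exact hz j)
  refine le_of_forall_pos_le_add fun ε hε => ?_
  obtain ⟨h, Df, D2, C2, h1, h2, h3, h4, h5, h6, h7⟩ := smoothing f hf (ε / 2) (by positivity)
  have k0 := hs h Df D2 C2 h1 h2 h3 h4 h5 h6
  have k1 : |∫ z, h (X z) ∂μ - ∫ z, f (X z) ∂μ| ≤ ε / 2 := by
    rw [← integral_sub (hix h h6) (hix f hf)]
    have := norm_integral_le_of_norm_le (μ := μ) (f := fun z => h (X z) - f (X z)) (integrable_const (ε / 2))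
      (Filter.Eventually.of_forall fun z => h7 (X z))
    simpa using this
  have k2 : |∫ z, h z ∂(gam d) - ∫ z, f z ∂(gam d)| ≤ ε / 2 := by
    rw [← integral_sub (hig h h6) (hig f hf)]
    have := norm_integral_le_of_norm_le (μ := gam d) (f := fun z => h z - f z) (integrable_const (ε / 2))
      (Filter.Eventually.of_forall fun z => h7 z)
    simpa using this
  rw [abs_le] at *
  constructor <;> linarith [k0.1, k0.2, k1.1, k1.2, k2.1, k2.2]

lemma core {n s d : ℕ} (hn : 1 ≤ n) (hs : 1 ≤ s) (hd : 0 < d)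
    {μ : Measure (Fin n × Fin s → ℂ)} (hμ : SphInv μ)
    (B : Fin d → Matrix (Fin n) (Fin n) ℂ) (hB : ∀ j, (B j)ᴴ = B j) (htr : ∀ j, (B j).trace = 0)
    (hBB : ∀ j k, ((B j) * (B k)).trace = if j = k then (1 : ℂ) else 0)
    (f : (Fin d → ℝ) → ℝ) (hf : ∀ x y, |f x - f y| ≤ √(∑ i, (x i - y i) ^ 2)) :
    |∫ z, f (√((n : ℝ) * ((n : ℝ) * (s : ℝ) + 1)) •
        Xq (fun j => B j ⊗ₖ (1 : Matrix (Fin s) (Fin s) ℂ)) z) ∂μ - ∫ x, f x ∂(gam d)| ≤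
      8 / √s * ∑ j, √((B j * B j * B j * B j).trace.re) := by
  have := hμ.prob
  have hn0 : (0 : ℝ) < n := by exact_mod_cast hn
  have hs0 : (0 : ℝ) < s := by exact_mod_cast hs
  have hn1 : (1 : ℝ) ≤ n := by exact_mod_cast hn
  have hs1 : (1 : ℝ) ≤ s := by exact_mod_cast hs
  set A : Fin d → Matrix (Fin n × Fin s) (Fin n × Fin s) ℂ := fun j => B j ⊗ₖ (1 : Matrix (Fin s) (Fin s) ℂ)
    with hAdef
  set r : ℝ := √((n : ℝ) * ((n : ℝ) * (s : ℝ) + 1)) with hr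
  set N : ℝ := (n : ℝ) * s with hN
  have hN0 : 0 < N := by positivity
  have hN1 : 1 ≤ N := by nlinarith
  have hr2 : r * r = n * (N + 1) := Real.mul_self_sqrt (by positivity)
  have hcard : ((Fintype.card (Fin n × Fin s) : ℕ) : ℝ) = N := by simp [N]
  have hcpos : 0 < Fintype.card (Fin n × Fin s) := by simp; omega
  let b : Fin d → ℝ := fun j => √((B j * B j * B j * B j).trace.re)
  have hb0 : ∀ j, 0 ≤ b j := fun j => Real.sqrt_nonneg _
  have hb1 : ∀ j, 1 ≤ √n * b j := fun j => by
    have := tr_lower (B j) (hB j) (by rw [hBB]; simp)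
    simpa using this
  have hbp : ∀ j, 0 < b j := fun j => by
    refine lt_of_le_of_ne (hb0 j) fun h => ?_
    have := hb1 j
    rw [← h] at this
    norm_num at this
  have hA : ∀ j, (A j)ᴴ = A j := fun j => by
    simp only [hAdef, conjTranspose_kronecker, hB, conjTranspose_one]
  have hAtr : ∀ j, (A j).trace = 0 := fun j => by simp [hAdef, trace_kronecker, htr]
  let HB : Fin d → Fin d → Matrix (Fin n) (Fin n) ℂ := fun j k => (1/2 : ℂ) • (B k * B j + B j * B k)
  let H : Fin d → Fin d → Matrix (Fin n × Fin s) (Fin n × Fin s) ℂ := fun j k =>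
    (1/2 : ℂ) • (A k * A j + A j * A k)
  have hAA : ∀ j k, A j * A k = (B j * B k) ⊗ₖ (1 : Matrix (Fin s) (Fin s) ℂ) := fun j k => by
    simp only [hAdef, ← mul_kronecker_mul, mul_one]
  have hHk : ∀ j k, H j k = HB j k ⊗ₖ (1 : Matrix (Fin s) (Fin s) ℂ) := fun j k => by
    simp only [H, HB, hAA, ← add_kronecker, smul_kronecker]
  have hHh : ∀ j k, (H j k)ᴴ = H j k := fun j k => by
    simp only [H, conjTranspose_smul, conjTranspose_add, conjTranspose_mul, hA]
    rw [add_comm]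
    congr 1
    simp
  have hHtr : ∀ j k, (H j k).trace.re = s * (if j = k then 1 else 0) := fun j k => by
    rw [hHk, trace_kronecker]
    simp only [HB, trace_smul, trace_add, hBB, trace_one, Fintype.card_fin]
    by_cases h : j = k
    · subst h; norm_num
    · simp [h, Ne.symm h]
  have hHH : ∀ j k, (H j k * H j k).trace.re ≤ s * (b j * b k) := fun j k => by
    rw [hHk, ← mul_kronecker_mul, trace_kronecker, mul_one, trace_one, Fintype.card_fin]
    have h1 := tr_four (B k) (B j) (hB k) (hB j)
    have e : ((HB j k * HB j k).trace * (s : ℂ)).re = (HB j k * HB j k).trace.re * s := by simp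
    rw [e, mul_comm, mul_comm (b j)]
    exact mul_le_mul_of_nonneg_left h1 hs0.le
  let X : (Fin n × Fin s → ℂ) → Fin d → ℝ := fun z => r • Xq A z
  have hXc : Continuous X := (Xq_cont A).const_smul r
  let T : Fin d → Fin d → (Fin n × Fin s → ℂ) → ℝ := fun j k z =>
    (r * r / N) * ((qf (H j k) z).re - (qf (A k) z).re * (qf (A j) z).re)
  let W : Fin d → Fin d → (Fin n × Fin s → ℂ) → ℝ := fun j k z =>
    ((N + 1) / s) * ((qf (H j k) z).re - (if j = k then 1 else 0) / n)
  have hqc : ∀ M : Matrix (Fin n × Fin s) (Fin n × Fin s) ℂ, Continuous fun z => (qf M z).re := fun M =>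
    Complex.continuous_re.comp (qf_cont M)
  have hTc : ∀ j k, Continuous (T j k) := fun j k =>
    continuous_const.mul ((hqc _).sub ((hqc _).mul (hqc _)))
  have hWc : ∀ j k, Continuous (W j k) := fun j k =>
    continuous_const.mul ((hqc _).sub continuous_const)
  -- uniform bound
  have hR : ∃ R : ℝ, (∀ᵐ z ∂μ, ∀ j, |X z j| ≤ R) ∧ (∀ᵐ z ∂μ, ∀ j k, |T j k z| ≤ R) ∧
      (∀ᵐ z ∂μ, ∀ j k, |W j k z| ≤ R) := by
    have hc : Continuous fun z => (X z, (fun j k => T j k z : Fin d → Fin d → ℝ),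
        (fun j k => W j k z : Fin d → Fin d → ℝ)) :=
      hXc.prodMk ((continuous_pi fun j => continuous_pi fun k => hTc j k).prodMk
        (continuous_pi fun j => continuous_pi fun k => hWc j k))
    obtain ⟨R, hR⟩ := sph_bdd _ hc
    refine ⟨R, ?_, ?_, ?_⟩
    · filter_upwards [hμ.sph] with z hz j
      exact (norm_le_pi_norm (X z) j).trans ((norm_fst_le _).trans (hR z hz))
    · filter_upwards [hμ.sph] with z hz j k
      exact (norm_le_pi_norm (fun k => T j k z) k).trans ((norm_le_pi_norm (fun j k => T j k z) j).trans
        ((norm_fst_le _).trans ((norm_snd_le _).trans (hR z hz))))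
    · filter_upwards [hμ.sph] with z hz j k
      exact (norm_le_pi_norm (fun k => W j k z) k).trans ((norm_le_pi_norm (fun j k => W j k z) j).trans
        ((norm_snd_le _).trans ((norm_snd_le _).trans (hR z hz))))
  obtain ⟨R, hRX, hRT, hRW⟩ := hR
  have hS : ∀ (j : Fin d) (u : (Fin d → ℝ) → ℝ) (D : (Fin d → ℝ) → (Fin d → ℝ) →L[ℝ] ℝ),
      (∀ x, HasFDerivAt u (D x) x) → Continuous D →
      ∫ z, u (X z) * X z j ∂μ = ∫ z, ∑ k, D (X z) (Pi.single k 1) * T j k z ∂μ := by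
    intro j u D hu hD
    have h := stein hμ A hA (fun x => u (r • x)) (fun x => r • D (r • x)) (fun x => by
      have h1 : HasFDerivAt (fun x : Fin d → ℝ => r • x)
          (r • ContinuousLinearMap.id ℝ (Fin d → ℝ)) x := (hasFDerivAt_id x).const_smul r
      refine ((hu _).comp x h1).congr_fderiv ?_
      ext v
      simp) (by fun_prop) (A j) (hA j)
    rw [hcard, hAtr] at h
    have e1 : ∀ z, u (X z) * X z j = (r / N) * (u (r • Xq A z) * (N * (qf (A j) z).re - (0 : ℂ).re)) := by
      intro z
      simp only [X, Xq, Pi.smul_apply, smul_eq_mul, Complex.zero_re, sub_zero]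
      field_simp
    simp only [e1]
    rw [integral_const_mul, h, ← integral_const_mul]
    congr 1
    ext z
    rw [Finset.mul_sum]
    refine Finset.sum_congr rfl fun k _ => ?_
    simp only [_root_.smul_apply, smul_eq_mul, T, H, X]
    ring
  let K : ℝ := √(2 / s) * ∑ j, b j
  have hK : 0 < K := by
    have : 0 < ∑ j, b j := Finset.sum_pos (fun j _ => hbp j) ⟨⟨0, hd⟩, Finset.mem_univ _⟩
    positivity
  have hWK : ∑ j, ∑ k, ∫ z, W j k z ^ 2 ∂μ ≤ K ^ 2 := by
    have h1 : ∀ j k, ∫ z, W j k z ^ 2 ∂μ ≤ 2 / s * (b j * b k) := by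
      intro j k
      have hv := sph_var hμ hcpos (H j k) (hHh j k)
      rw [hcard, hHtr] at hv
      have e : ∀ z, W j k z ^ 2 = ((N + 1) / s) ^ 2 * ((qf (H j k) z).re - s * (if j = k then 1 else 0) / N) ^ 2 := by
        intro z
        simp only [W]
        rw [mul_pow]
        congr 3
        rw [hN]; field_simp
      simp only [e]
      rw [integral_const_mul]
      have hbb : 0 ≤ b j * b k := mul_nonneg (hb0 j) (hb0 k)
      calc _ ≤ ((N + 1) / s) ^ 2 * (s * (b j * b k) / (N * (N + 1))) := by
            refine mul_le_mul_of_nonneg_left (hv.trans ?_) (sq_nonneg _)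
            exact div_le_div_of_nonneg_right (hHH j k) (by positivity)
        _ = (N + 1) / (s * N) * (b j * b k) := by field_simp
        _ ≤ 2 / s * (b j * b k) := by
            refine mul_le_mul_of_nonneg_right ?_ hbb
            rw [div_le_div_iff₀ (by positivity) hs0]
            nlinarith
    calc _ ≤ ∑ j, ∑ k, 2 / s * (b j * b k) := Finset.sum_le_sum fun j _ => Finset.sum_le_sum fun k _ => h1 j k
      _ = K ^ 2 := by
        simp only [K, mul_pow]
        rw [Real.sq_sqrt (by positivity), sq, Finset.sum_mul_sum]
        simp only [Finset.mul_sum]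
  have hXd : ∑ j, ∫ z, X z j ^ 2 ∂μ ≤ d := by
    have h1 : ∀ j, ∫ z, X z j ^ 2 ∂μ ≤ 1 := by
      intro j
      have hv := sph_var hμ hcpos (A j) (hA j)
      rw [hcard, hAtr, hAA, trace_kronecker, hBB, trace_one] at hv
      simp only [if_true, one_mul, Fintype.card_fin, Complex.natCast_re, Complex.zero_re, zero_div, sub_zero] at hv
      have e : ∀ z, X z j ^ 2 = (r * r) * (qf (A j) z).re ^ 2 := by
        intro z
        simp only [X, Xq, Pi.smul_apply, smul_eq_mul]
        ring
      simp only [e]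
      rw [integral_const_mul, hr2]
      calc _ ≤ n * (N + 1) * (s / (N * (N + 1))) := mul_le_mul_of_nonneg_left hv (by positivity)
        _ = 1 := by rw [hN]; field_simp
    calc _ ≤ ∑ j : Fin d, (1 : ℝ) := Finset.sum_le_sum fun j _ => h1 j
      _ = d := by simp
  have hTW : ∀ j k z, T j k z = (if j = k then 1 else 0) + W j k z + N⁻¹ * (if j = k then 1 else 0)
      - N⁻¹ * (X z j * X z k) := by
    intro j k z
    have e1 : X z j * X z k = (r * r) * ((qf (A k) z).re * (qf (A j) z).re) := by
      simp only [X, Xq, Pi.smul_apply, smul_eq_mul]; ring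
    rw [e1]
    simp only [T, W, hr2]
    generalize (if j = k then (1 : ℝ) else 0) = δ
    rw [hN]
    field_simp
    ring
  have main := lip_core μ X hXc.measurable R hRX (2 * (K + 2 * N⁻¹ * d))
    (fun f Df D2 C2 h1 h2 h3 h4 h5 h6 =>
      smooth_bound μ X T W R hXc.measurable (fun j k => (hTc j k).measurable) hRX hRT
        (fun j k => (hWc j k).measurable) hRW hS K N⁻¹ hK (by positivity) hWK hXd hTW f Df D2 C2 h1 h2 h3 h4 h5 h6)
    f hf
  refine main.trans ?_
  have hdN : N⁻¹ * d ≤ 1 / √s * ∑ j, b j := by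
    have h1 : (d : ℝ) ≤ ∑ j, √n * b j := by
      calc (d : ℝ) = ∑ j : Fin d, (1 : ℝ) := by simp
        _ ≤ _ := Finset.sum_le_sum fun j _ => hb1 j
    rw [← Finset.mul_sum] at h1
    have hb : 0 ≤ ∑ j, b j := Finset.sum_nonneg fun j _ => hb0 j
    have h2 : N⁻¹ * √n ≤ 1 / √s := by
      rw [inv_mul_eq_div, div_le_div_iff₀ hN0 (by positivity), one_mul, ← Real.sqrt_mul hn0.le, ← hN]
      rw [Real.sqrt_le_left (by positivity)]
      nlinarith
    calc N⁻¹ * d ≤ N⁻¹ * (√n * ∑ j, b j) := mul_le_mul_of_nonneg_left h1 (by positivity)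
      _ = (N⁻¹ * √n) * ∑ j, b j := by ring
      _ ≤ _ := mul_le_mul_of_nonneg_right h2 hb
  have hKb : K ≤ 2 / √s * ∑ j, b j := by
    refine mul_le_mul_of_nonneg_right ?_ (Finset.sum_nonneg fun j _ => hb0 j)
    rw [Real.sqrt_div (by norm_num)]
    refine div_le_div_of_nonneg_right ?_ (by positivity)
    rw [Real.sqrt_le_left (by norm_num)]; norm_num
  have : 8 / √s * ∑ j, b j = 2 * (2 / √s * ∑ j, b j + 2 * (1 / √s * ∑ j, b j)) := by ring
  change _ ≤ 8 / √s * ∑ j, b j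
  rw [this]
  linarith


theorem stmt6 :
    ∃ C : ℝ, 0 < C ∧
      ∀ (n s d : ℕ) (_ : 1 ≤ n) (_ : 1 ≤ s) (Ω : Type u) [MeasurableSpace Ω]
        (P : Measure Ω) [IsProbabilityMeasure P]
        (Z : Ω → (Fin n × Fin s) → ℂ) (_ : Measurable Z)
        -- Z takes values in the unit sphere of ℂⁿ ⊗ ℂˢ ≅ ℂ^{ns}:
        (_ : ∀ ω, ∑ j, Complex.normSq (Z ω j) = 1)
        -- the law of Z is invariant under the unitary group (uniform on the sphere):
        (_ : ∀ V ∈ Matrix.unitaryGroup (Fin n × Fin s) ℂ,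
          Measure.map (fun ω => Matrix.mulVec V (Z ω)) P = Measure.map Z P)
        (B : Fin d → Matrix (Fin n) (Fin n) ℂ)
        (_ : ∀ j, (B j).IsHermitian) (_ : ∀ j, (B j).trace = 0)
        (_ : ∀ j k, ((B j) * (B k)).trace = if j = k then (1 : ℂ) else 0)
        (f : (Fin d → ℝ) → ℝ)
        (_ : ∀ x y : Fin d → ℝ, |f x - f y| ≤ Real.sqrt (∑ i, (x i - y i) ^ 2)),
        |(∫ ω, f (fun j => Real.sqrt ((n : ℝ) * ((n : ℝ) * (s : ℝ) + 1)) *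
              (star (Z ω) ⬝ᵥ
                ((B j ⊗ₖ (1 : Matrix (Fin s) (Fin s) ℂ)).mulVec (Z ω))).re) ∂P) -
            ∫ x, f x ∂(Measure.pi fun _ : Fin d => gaussianReal 0 1)| ≤
          (C / Real.sqrt s) *
            ∑ j, Real.sqrt ((((B j) * (B j) * (B j) * (B j)).trace).re) := by
  refine ⟨8, by norm_num, ?_⟩
  intro n s d hn hs Ω _ P _ Z hZ hsph hinv B hB htr hBB f hf
  rcases Nat.eq_zero_or_pos d with h0 | hd
  · subst h0
    have e : ∀ x : Fin 0 → ℝ, f x = f 0 := fun x => by rw [Subsingleton.elim x 0]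
    simp only [e]
    simp
  have hμ : SphInv (P.map Z) := by
    refine ⟨Measure.isProbabilityMeasure_map hZ.aemeasurable, ?_, ?_⟩
    · rw [ae_map_iff hZ.aemeasurable]
      · exact Filter.Eventually.of_forall hsph
      · exact (sph_compact (ι := Fin n × Fin s)).isClosed.measurableSet
    · intro V hV
      have hm : Measurable fun z : Fin n × Fin s → ℂ => V *ᵥ z :=
        (Continuous.matrix_mulVec continuous_const continuous_id).measurable
      rw [Measure.map_map hm hZ]
      exact hinv V hV
  have h := core hn hs hd hμ B (fun j => hB j) htr hBB f hf
  rw [integral_map hZ.aemeasurable] at h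
  · exact h
  · have hfc : Continuous f := by
      have : LipschitzWith d f := LipschitzWith.of_dist_le_mul fun x y => by
        rw [dist_eq_norm, dist_eq_norm]
        refine (hf x y).trans ((sqrt_le_sum_abs _).trans ?_)
        calc ∑ j, |x j - y j| ≤ ∑ j : Fin d, ‖x - y‖ := Finset.sum_le_sum fun j _ => norm_le_pi_norm (x - y) j
          _ = d * ‖x - y‖ := by simp
      exact this.continuous
    exact (hfc.comp ((Xq_cont (fun j => B j ⊗ₖ (1 : Matrix (Fin s) (Fin s) ℂ))).const_smul
      (√((n : ℝ) * ((n : ℝ) * (s : ℝ) + 1))))).aestronglyMeasurable
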